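/- arXiv:2204.10671 — 6 statements merged into one kernel-verified Lean document; each statement's English description precedes it below -/
import Mathlib

section
/- Let k ≥ 1 and q ≥ 2 be integers, let θ be a permutation of {1,…,q}, let d ∈ ℕ, and let f : {0,1}^q → {0,1} be a Boolean function such that every deterministic kOBDD with variable order θ representing f has width at least d. Then every deterministic kOBDD (with an arbitrary variable order over its n = q(⌈log₂ q⌉+1) variables) representing the partial function ord(f) has width at least d, and likewise every deterministic kOBDD representing the partial function ⊕ord(f) has width at least d. -/
set_option maxHeartbeats 1000000
set_option linter.unusedVariables false
/-- `binVal l a = Σ_{j=1}^l a_j 2^{l-j}` (a₁ is the most significant bit). -/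
def binVal (l : ℕ) (a : Fin l → Bool) : ℕ :=
  ∑ j : Fin l, if a j then 2 ^ (l - 1 - (j : ℕ)) else 0
/-- A deterministic kOBDD of width `w` over `n` variables: `k` layers reading in order `ord`. -/
structure KOBDD (k n w : ℕ) where
  ord : Equiv.Perm (Fin n)
  tr : Fin k → Fin n → Fin w → Bool → Fin w
  start : Fin w
  acc : Finset (Fin w)

namespace KOBDD

def layerRun {k n w : ℕ} (M : KOBDD k n w) (t : Fin k) (s : Fin w) (x : Fin n → Bool) : Fin w :=
  (List.finRange n).foldl (fun a i => M.tr t i a (x (M.ord i))) s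

def final {k n w : ℕ} (M : KOBDD k n w) (x : Fin n → Bool) : Fin w :=
  (List.finRange k).foldl (fun s t => M.layerRun t s x) M.start

def Accepts {k n w : ℕ} (M : KOBDD k n w) (x : Fin n → Bool) : Prop :=
  M.final x ∈ M.acc

def Represents {k n w : ℕ} (M : KOBDD k n w) (f : (Fin n → Bool) → Bool) : Prop :=
  ∀ x, M.Accepts x ↔ f x = true

def RepresentsPartial {k n w : ℕ} (M : KOBDD k n w) (F : (Fin n → Bool) → Option Bool) : Prop :=
  ∀ x b, F x = some b → (M.Accepts x ↔ b = true)

/-- Each layer is a commutative OBDD: for every reading order `π`, the reordered layer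
(with transitions `tr' i = tr (ord⁻¹(π i))`) computes, from every start state,
the same state transformation as the original layer. -/
def Commutative {k n w : ℕ} (M : KOBDD k n w) : Prop :=
  ∀ (π : Equiv.Perm (Fin n)) (t : Fin k) (s : Fin w) (x : Fin n → Bool),
    (List.finRange n).foldl (fun a i => M.tr t (M.ord.symm (π i)) a (x (π i))) s =
      M.layerRun t s x

end KOBDD
lemma zIdx {q l : ℕ} (i : Fin q) (j : Fin l) : (i : ℕ) * l + (j : ℕ) < q * (l + 1) :=
  calc (i : ℕ) * l + (j : ℕ) < (i : ℕ) * l + l := Nat.add_lt_add_left j.isLt _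
    _ = ((i : ℕ) + 1) * l := by ring
    _ ≤ q * l := Nat.mul_le_mul i.isLt (Nat.le_refl l)
    _ ≤ q * (l + 1) := Nat.mul_le_mul (Nat.le_refl q) (Nat.le_succ l)

lemma yIdx {q l : ℕ} (i : Fin q) : q * l + (i : ℕ) < q * (l + 1) :=
  calc q * l + (i : ℕ) < q * l + q := Nat.add_lt_add_left i.isLt _
    _ = q * (l + 1) := by ring

/-- The bit `z_{i,j}` of an input to the reordered function
(layout: `z_{1,1},…,z_{q,l}, y_1,…,y_q`). -/
def zOf (q l : ℕ) (x : Fin (q * (l + 1)) → Bool) (i : Fin q) (j : Fin l) : Bool :=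
  x ⟨(i : ℕ) * l + (j : ℕ), zIdx i j⟩

/-- The value bit `y_i` of an input to the reordered function. -/
def yOf (q l : ℕ) (x : Fin (q * (l + 1)) → Bool) (i : Fin q) : Bool :=
  x ⟨q * l + (i : ℕ), yIdx i⟩

/-- `z_{1,j} ⊕ ⋯ ⊕ z_{i,j}`. -/
def xorZ (q l : ℕ) (x : Fin (q * (l + 1)) → Bool) (i : Fin q) (j : Fin l) : Bool :=
  decide ((Finset.univ.filter (fun i' : Fin q => i' ≤ i ∧ zOf q l x i' j = true)).card % 2 = 1)

/-- `θ(i) − 1` for the plain reordering. -/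
def addrOrd (q l : ℕ) (x : Fin (q * (l + 1)) → Bool) (i : Fin q) : ℕ :=
  binVal l (zOf q l x i)

/-- `θ(i) − 1` for the xor-reordering. -/
def addrXor (q l : ℕ) (x : Fin (q * (l + 1)) → Bool) (i : Fin q) : ℕ :=
  binVal l (xorZ q l x i)

/-- The partial reordered function: defined exactly when the addresses form a
permutation of `{1,…,q}`; then position `j` of `f`'s argument is `y_{θ⁻¹(j)}`. -/
noncomputable def ordPartial (q l : ℕ) (f : (Fin q → Bool) → Bool)
    (addr : (Fin (q * (l + 1)) → Bool) → Fin q → ℕ) :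
    (Fin (q * (l + 1)) → Bool) → Option Bool := fun x =>
  if h : ∃ σ : Equiv.Perm (Fin q), ∀ i, addr x i = (σ i : ℕ) then
    some (f fun j => yOf q l x (h.choose.symm j))
  else none

/-- The partial function `ord(f)`. -/
noncomputable def ordF (q : ℕ) (f : (Fin q → Bool) → Bool) :
    (Fin (q * (Nat.clog 2 q + 1)) → Bool) → Option Bool :=
  ordPartial q (Nat.clog 2 q) f (addrOrd q (Nat.clog 2 q))

/-- The partial function `⊕ord(f)`. -/
noncomputable def xorOrdF (q : ℕ) (f : (Fin q → Bool) → Bool) :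
    (Fin (q * (Nat.clog 2 q + 1)) → Bool) → Option Bool :=
  ordPartial q (Nat.clog 2 q) f (addrXor q (Nat.clog 2 q))

/-- Every number below `2 ^ l` is the value of some `l`-bit string. -/
lemma exists_binVal_eq (l v : ℕ) (hv : v < 2 ^ l) : ∃ a : Fin l → Bool, binVal l a = v := by
  induction l generalizing v with
  | zero => exact ⟨fun _ => false, by simp at hv; simp [binVal, hv]⟩
  | succ l ih =>
    obtain ⟨a, ha⟩ := ih (v % 2 ^ l) (Nat.mod_lt _ (by positivity))
    refine ⟨Fin.cons (decide (2 ^ l ≤ v)) a, ?_⟩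
    have hcons : binVal (l + 1) (Fin.cons (decide (2 ^ l ≤ v)) a) =
        (if 2 ^ l ≤ v then 2 ^ l else 0) + binVal l a := by
      unfold binVal
      rw [Fin.sum_univ_succ]
      congr 1
      · simp
      · refine Finset.sum_congr rfl fun j _ => ?_
        rw [Fin.cons_succ, Fin.val_succ, show l + 1 - 1 - ((j : ℕ) + 1) = l - 1 - j by omega]
    rw [hcons, ha]
    split_ifs with h
    · rw [Nat.mod_eq_sub_mod h, Nat.mod_eq_of_lt (by rw [pow_succ] at hv; omega)]
      omega
    · rw [Nat.mod_eq_of_lt (by omega), zero_add]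

/-- Every family of Boolean prefix sums modulo two comes from a family of summands. -/
lemma exists_prefix_parity {q : ℕ} (a : Fin q → Bool) :
    ∃ z : Fin q → Bool, ∀ i : Fin q,
      decide ((Finset.univ.filter (fun i' : Fin q => i' ≤ i ∧ z i' = true)).card % 2 = 1)
        = a i := by
  let z : Fin q → Bool := fun i =>
    xor (a i) (if h : (i : ℕ) = 0 then false else a ⟨(i : ℕ) - 1, by omega⟩)
  refine ⟨z, fun ⟨n, hn⟩ => ?_⟩
  induction n with
  | zero =>
    have hz : z ⟨0, hn⟩ = a ⟨0, hn⟩ := by simp [z]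
    cases h : a ⟨0, hn⟩
    · have : Finset.univ.filter (fun i' : Fin q => i' ≤ ⟨0, hn⟩ ∧ z i' = true) = ∅ := by
        ext i
        simp only [Finset.mem_filter, Finset.mem_univ, true_and, Finset.notMem_empty, iff_false]
        rintro ⟨h1, h2⟩
        obtain rfl : i = ⟨0, hn⟩ := Fin.ext (by simpa [Fin.le_def] using h1)
        simp_all
      simp [this]
    · have : Finset.univ.filter (fun i' : Fin q => i' ≤ ⟨0, hn⟩ ∧ z i' = true)
          = {⟨0, hn⟩} := by
        ext i
        simp only [Finset.mem_filter, Finset.mem_univ, true_and, Finset.mem_singleton]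
        constructor
        · rintro ⟨h1, -⟩
          exact Fin.ext (by simpa [Fin.le_def] using h1)
        · rintro rfl
          exact ⟨le_rfl, by rw [hz, h]⟩
      simp [this]
  | succ n ih =>
    have ih' := ih (by omega)
    have hz : z ⟨n + 1, hn⟩ = xor (a ⟨n + 1, hn⟩) (a ⟨n, by omega⟩) := by simp [z]
    cases h : z ⟨n + 1, hn⟩
    · have : Finset.univ.filter (fun i' : Fin q => i' ≤ ⟨n + 1, hn⟩ ∧ z i' = true)
          = Finset.univ.filter (fun i' : Fin q => i' ≤ ⟨n, by omega⟩ ∧ z i' = true) := by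
        ext i
        simp only [Finset.mem_filter, Finset.mem_univ, true_and, Fin.le_def]
        refine ⟨fun ⟨h1, h2⟩ => ⟨?_, h2⟩, fun ⟨h1, h2⟩ => ⟨by omega, h2⟩⟩
        by_contra hlt
        obtain rfl : i = ⟨n + 1, hn⟩ := Fin.ext (by simp; omega)
        simp_all
      rw [this, ih']
      rw [h] at hz
      revert hz
      cases a ⟨n + 1, hn⟩ <;> cases a ⟨n, by omega⟩ <;> simp
    · have : Finset.univ.filter (fun i' : Fin q => i' ≤ ⟨n + 1, hn⟩ ∧ z i' = true)
          = insert ⟨n + 1, hn⟩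
            (Finset.univ.filter (fun i' : Fin q => i' ≤ ⟨n, by omega⟩ ∧ z i' = true)) := by
        ext i
        simp only [Finset.mem_filter, Finset.mem_univ, true_and, Finset.mem_insert, Fin.le_def]
        constructor
        · rintro ⟨h1, h2⟩
          by_cases hi : (i : ℕ) = n + 1
          · exact Or.inl (Fin.ext hi)
          · exact Or.inr ⟨by omega, h2⟩
        · rintro (rfl | ⟨h1, h2⟩)
          · exact ⟨le_rfl, h⟩
          · exact ⟨by omega, h2⟩
      rw [this, Finset.card_insert_of_notMem (by simp [Fin.le_def])]
      rw [h] at hz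
      have hne : a ⟨n + 1, hn⟩ = !a ⟨n, by omega⟩ := by
        revert hz
        cases a ⟨n + 1, hn⟩ <;> cases a ⟨n, by omega⟩ <;> simp
      rw [hne, ← ih', ← decide_not, decide_eq_decide]
      omega

/-- Fixing the address variables suitably forces `zOf` to take any prescribed values. -/
lemma exists_zOf_eq {q l : ℕ} (a : Fin q → Fin l → Bool) :
    ∃ Z : Fin (q * (l + 1)) → Bool, ∀ x : Fin (q * (l + 1)) → Bool,
      (∀ n : Fin (q * (l + 1)), (n : ℕ) < q * l → x n = Z n) → zOf q l x = a := by
  refine ⟨fun n => if h : (n : ℕ) < q * l then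
    a ⟨(n : ℕ) / l, Nat.div_lt_of_lt_mul (h.trans_eq (mul_comm q l))⟩
      ⟨(n : ℕ) % l, Nat.mod_lt _ (Nat.pos_of_ne_zero (by rintro rfl; simp at h))⟩
    else false, fun x hx => ?_⟩
  funext i j
  have hl : 0 < l := j.pos
  have hlt : (i : ℕ) * l + j < q * l :=
    calc (i : ℕ) * l + j < (i : ℕ) * l + l := Nat.add_lt_add_left j.isLt _
      _ = ((i : ℕ) + 1) * l := by ring
      _ ≤ q * l := Nat.mul_le_mul_right l i.isLt
  have hdiv : ((i : ℕ) * l + j) / l = i := by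
    rw [mul_comm, Nat.mul_add_div hl, Nat.div_eq_of_lt j.isLt, add_zero]
  have hmod : ((i : ℕ) * l + j) % l = j := by
    rw [mul_comm, Nat.mul_add_mod, Nat.mod_eq_of_lt j.isLt]
  rw [zOf, hx _ hlt]
  refine (dif_pos hlt).trans ?_
  exact congr_arg₂ a (Fin.ext hdiv) (Fin.ext hmod)

lemma exists_addrOrd {q l : ℕ} (hl : q ≤ 2 ^ l) (σ : Equiv.Perm (Fin q)) :
    ∃ Z : Fin (q * (l + 1)) → Bool, ∀ x : Fin (q * (l + 1)) → Bool,
      (∀ n : Fin (q * (l + 1)), (n : ℕ) < q * l → x n = Z n) →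
        ∀ i, addrOrd q l x i = (σ i : ℕ) := by
  choose a ha using fun i : Fin q => exists_binVal_eq l (σ i) ((σ i).isLt.trans_le hl)
  obtain ⟨Z, hZ⟩ := exists_zOf_eq a
  exact ⟨Z, fun x hx i => by rw [addrOrd, hZ x hx, ha]⟩

lemma exists_addrXor {q l : ℕ} (hl : q ≤ 2 ^ l) (σ : Equiv.Perm (Fin q)) :
    ∃ Z : Fin (q * (l + 1)) → Bool, ∀ x : Fin (q * (l + 1)) → Bool,
      (∀ n : Fin (q * (l + 1)), (n : ℕ) < q * l → x n = Z n) →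
        ∀ i, addrXor q l x i = (σ i : ℕ) := by
  choose a ha using fun i : Fin q => exists_binVal_eq l (σ i) ((σ i).isLt.trans_le hl)
  choose z hz using fun j : Fin l => exists_prefix_parity fun i => a i j
  obtain ⟨Z, hZ⟩ := exists_zOf_eq fun i j => z j i
  refine ⟨Z, fun x hx i => ?_⟩
  have hxor : xorZ q l x i = a i := by
    funext j
    rw [xorZ, hZ x hx]
    exact hz j i
  rw [addrXor, hxor, ha]

/-- Steps reading fixed bits can be absorbed into the steps reading free bits, up to an initial
state change. -/
lemma exists_foldl_filter_eq_init {α S : Type*} (p : α → Bool) (c : α → Bool)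
    (F : α → S → Bool → S) (L : List α) (hL : L.Nodup) :
    ∃ (h : S → S) (G : α → S → Bool → S), ∀ v : α → Bool, (∀ i, p i = false → v i = c i) →
      ∀ s, L.foldl (fun a i => F i a (v i)) s
        = (L.filter p).foldl (fun a i => G i a (v i)) (h s) := by
  classical
  induction L with
  | nil => exact ⟨id, F, fun v _ s => rfl⟩
  | cons i L ih =>
    obtain ⟨hi, hL⟩ := List.nodup_cons.1 hL
    obtain ⟨h, G, hG⟩ := ih hL
    cases hp : p i
    · refine ⟨fun s => h (F i s (c i)), G, fun v hv s => ?_⟩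
      rw [List.foldl_cons, hG v hv, List.filter_cons_of_neg (by simp [hp]), hv i hp]
    · refine ⟨id, Function.update G i fun s b => h (F i s b), fun v hv s => ?_⟩
      rw [List.foldl_cons, hG v hv, List.filter_cons_of_pos hp, List.foldl_cons,
        Function.update_self]
      refine List.foldl_ext _ _ _ fun a j hj => ?_
      rw [Function.update_of_ne]
      rintro rfl
      exact hi (List.mem_of_mem_filter hj)

/-- Steps reading fixed bits can be absorbed into the steps reading free bits, as soon as there is
at least one of the latter. -/
lemma exists_foldl_filter_eq {α S : Type*} (p : α → Bool) (c : α → Bool)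
    (F : α → S → Bool → S) (L : List α) (hL : L.Nodup) (hne : L.filter p ≠ []) :
    ∃ G : α → S → Bool → S, ∀ v : α → Bool, (∀ i, p i = false → v i = c i) →
      ∀ s, L.foldl (fun a i => F i a (v i)) s
        = (L.filter p).foldl (fun a i => G i a (v i)) s := by
  classical
  obtain ⟨h, G, hG⟩ := exists_foldl_filter_eq_init p c F L hL
  have hnd : (L.filter p).Nodup := hL.filter p
  obtain ⟨i, L', hL'⟩ := List.exists_cons_of_ne_nil hne
  rw [hL'] at hnd
  refine ⟨Function.update G i fun s b => G i (h s) b, fun v hv s => ?_⟩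
  rw [hG v hv, hL', List.foldl_cons, List.foldl_cons, Function.update_self]
  refine List.foldl_ext _ _ _ fun a j hj => ?_
  rw [Function.update_of_ne]
  rintro rfl
  exact (List.nodup_cons.1 hnd).1 hj

/-- The positions at which a reading order visits the range of an injection `y`, in the order in
which they are visited, list the range of `y` up to a permutation. -/
lemma exists_filter_finRange_eq_map {q N : ℕ} (π : Equiv.Perm (Fin N)) (y : Fin q → Fin N)
    (hy : Function.Injective y) (p : Fin N → Bool) (hp : ∀ i, p i = true ↔ ∃ j, π i = y j) :
    ∃ (pos : Fin q → Fin N) (ρ : Equiv.Perm (Fin q)), (∀ m, π (pos m) = y (ρ m)) ∧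
      (List.finRange N).filter p = (List.finRange q).map pos := by
  classical
  have hnd : ((List.finRange N).filter p).Nodup := (List.nodup_finRange N).filter p
  have hlen : ((List.finRange N).filter p).length = q := by
    have hset : ((List.finRange N).filter p).toFinset
        = Finset.univ.image (π.symm ∘ y) := by
      ext i
      simp only [List.mem_toFinset, List.mem_filter, List.mem_finRange, true_and, hp,
        Finset.mem_image, Finset.mem_univ, Function.comp_apply]
      exact exists_congr fun j => by rw [Equiv.symm_apply_eq, eq_comm]
    rw [← List.toFinset_card_of_nodup hnd, hset,
      Finset.card_image_of_injective _ (π.symm.injective.comp hy), Finset.card_fin]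
  have hmem : ∀ i ∈ (List.finRange N).filter p, ∃ j, π i = y j := fun i hi =>
    (hp i).1 (List.mem_filter.1 hi).2
  generalize (List.finRange N).filter p = P at *
  subst hlen
  choose ρ hρ using fun m : Fin P.length => hmem (P.get m) (P.get_mem m)
  have hinj : Function.Injective ρ := fun a b hab =>
    List.nodup_iff_injective_get.1 hnd (π.injective (by rw [hρ, hρ, hab]))
  exact ⟨P.get, Equiv.ofBijective ρ (Finite.injective_iff_bijective.1 hinj), hρ,
    (List.map_get_finRange P).symm⟩

/-- If every address permutation can be realised by fixing the address variables, then a width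
lower bound for `f` with a fixed variable order transfers to the reordered function with an
arbitrary variable order. -/
lemma le_width_of_representsPartial {k q l d : ℕ} (hq : 0 < q) (θ : Equiv.Perm (Fin q))
    (f : (Fin q → Bool) → Bool)
    (hlow : ∀ (w : ℕ) (M : KOBDD k q w), M.ord = θ → M.Represents f → d ≤ w)
    {addr : (Fin (q * (l + 1)) → Bool) → Fin q → ℕ}
    (haddr : ∀ σ : Equiv.Perm (Fin q), ∃ Z : Fin (q * (l + 1)) → Bool,
      ∀ x : Fin (q * (l + 1)) → Bool,
        (∀ n : Fin (q * (l + 1)), (n : ℕ) < q * l → x n = Z n) → ∀ i, addr x i = (σ i : ℕ))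
    {w : ℕ} (M : KOBDD k (q * (l + 1)) w) (hM : M.RepresentsPartial (ordPartial q l f addr)) :
    d ≤ w := by
  classical
  let y : Fin q → Fin (q * (l + 1)) := fun j => ⟨q * l + j, yIdx j⟩
  have hy : Function.Injective y := fun a b hab => Fin.ext (by simpa [y] using hab)
  let p : Fin (q * (l + 1)) → Bool := fun i => decide (∃ j, M.ord i = y j)
  obtain ⟨pos, ρ, hpos, hP⟩ :=
    exists_filter_finRange_eq_map M.ord y hy p fun i => decide_eq_true_iff
  obtain ⟨Z, hZ⟩ := haddr (ρ.symm.trans θ)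
  have hne : (List.finRange (q * (l + 1))).filter p ≠ [] := by
    rw [hP, ← List.length_pos_iff]
    simpa using hq
  choose G hG using fun t : Fin k => exists_foldl_filter_eq p (fun i => Z (M.ord i)) (M.tr t)
    (List.finRange (q * (l + 1))) (List.nodup_finRange _) hne
  let X : (Fin q → Bool) → Fin (q * (l + 1)) → Bool := fun u n =>
    if h : ∃ j, n = y j then u (θ (ρ.symm h.choose)) else Z n
  have hXy : ∀ u j, X u (y j) = u (θ (ρ.symm j)) := fun u j => by
    have h : ∃ j', y j = y j' := ⟨j, rfl⟩
    simp only [X]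
    rw [dif_pos h, ← hy h.choose_spec]
  have hXz : ∀ u n, (¬∃ j, n = y j) → X u n = Z n := fun u n h => dif_neg h
  have hXaddr : ∀ u i, addr (X u) i = ((ρ.symm.trans θ) i : ℕ) := fun u => by
    refine hZ _ fun n hn => hXz u n ?_
    rintro ⟨j, rfl⟩
    simp only [y] at hn
    omega
  let M' : KOBDD k q w := ⟨θ, fun t m => G t (pos m), M.start, M.acc⟩
  have hlayer : ∀ t s u, M'.layerRun t s u = M.layerRun t s (X u) := fun t s u => by
    unfold KOBDD.layerRun
    rw [hG t (fun i => X u (M.ord i)) (fun i hi => hXz u _ (of_decide_eq_false hi)), hP,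
      List.foldl_map]
    simp only [hpos, hXy, Equiv.symm_apply_apply, M']
  have hfinal : ∀ u, M'.final u = M.final (X u) := fun u => by
    simp only [KOBDD.final, hlayer, M']
  refine hlow w M' rfl fun u => ?_
  have hval : ordPartial q l f addr (X u) = some (f u) := by
    have h : ∃ σ : Equiv.Perm (Fin q), ∀ i, addr (X u) i = (σ i : ℕ) := ⟨_, hXaddr u⟩
    have hσ : h.choose = ρ.symm.trans θ :=
      Equiv.ext fun i => Fin.ext ((h.choose_spec i).symm.trans (hXaddr u i))
    rw [ordPartial, dif_pos h, hσ]
    congr 2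
    funext j
    exact (hXy u _).trans (by simp)
  rw [← hM (X u) (f u) hval, KOBDD.Accepts, KOBDD.Accepts, hfinal]

/-- a lower bound for `f` with a fixed order `θ` transfers to
lower bounds for `ord(f)` and `⊕ord(f)` with arbitrary orders. -/
theorem stmt0 (k q d : ℕ) (hk : 1 ≤ k) (hq : 2 ≤ q) (θ : Equiv.Perm (Fin q))
    (f : (Fin q → Bool) → Bool)
    (hlow : ∀ (w : ℕ) (M : KOBDD k q w), M.ord = θ → M.Represents f → d ≤ w) :
    (∀ (w : ℕ) (M : KOBDD k (q * (Nat.clog 2 q + 1)) w),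
        M.RepresentsPartial (ordF q f) → d ≤ w) ∧
    (∀ (w : ℕ) (M : KOBDD k (q * (Nat.clog 2 q + 1)) w),
        M.RepresentsPartial (xorOrdF q f) → d ≤ w) := by
  exact ⟨
    fun w M hM => le_width_of_representsPartial (by omega) θ f hlow
      (exists_addrOrd (Nat.le_pow_clog (by norm_num) q)) M hM,
    fun w M hM => le_width_of_representsPartial (by omega) θ f hlow
      (exists_addrXor (Nat.le_pow_clog (by norm_num) q)) M hM⟩
end

section
/- Let k ≥ 1 and q ≥ 2 be integers and f : {0,1}^q → {0,1} a Boolean function. If there is a commutative deterministic kOBDD of width d representing f, then there exist deterministic kOBDDs of width at most 2^{⌈log₂ q⌉}·d (in particular at most 2qd) representing the partial function ord(f) and the partial function ⊕ord(f), respectively. -/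
set_option maxHeartbeats 1000000
set_option linter.unusedVariables false
namespace KOBDD

/-- Relational induction for two folds over the list of all elements of `Fin n`. -/
lemma foldl_finRange_rel {S T : Type*} (R : ℕ → S → T → Prop) :
    ∀ {n : ℕ} (u : S → Fin n → S) (v : T → Fin n → T) (a : S) (b : T), R 0 a b →
      (∀ (i : Fin n) a b, R i a b → R (i + 1) (u a i) (v b i)) →
      R n ((List.finRange n).foldl u a) ((List.finRange n).foldl v b)
  | 0, u, v, a, b, h0, _ => by simpa using h0
  | n + 1, u, v, a, b, h0, hs => by
    simp only [List.finRange_succ_last, List.foldl_append, List.foldl_map, List.foldl_cons,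
      List.foldl_nil]
    exact hs (Fin.last n) _ _
      (foldl_finRange_rel R (fun a i => u a i.castSucc) (fun b i => v b i.castSucc) a b h0
        fun i a b h => hs i.castSucc a b h)

/-- A fold over `Fin (m * n)` is a fold over `m` consecutive blocks of length `n`. -/
lemma foldl_finRange_mul {S : Type*} {m n : ℕ} (u : S → Fin (m * n) → S) (a : S) :
    (List.finRange (m * n)).foldl u a =
      (List.finRange m).foldl (fun a i =>
        (List.finRange n).foldl (fun a j => u a (finProdFinEquiv (i, j))) a) a := by
  have hidx (i : Fin m) (j : Fin n) (h : (i : ℕ) * n + j < m * n) :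
      (⟨i * n + j, h⟩ : Fin (m * n)) = finProdFinEquiv (i, j) := by
    ext
    simp [finProdFinEquiv]
    ring
  rw [← List.ofFn_id, List.ofFn_mul, List.foldl_flatten, List.ofFn_eq_map, List.foldl_map]
  simp only [List.ofFn_eq_map, List.foldl_map, id, hidx]

/-- Updating each coordinate in a duplicate-free list once. -/
lemma foldl_update {ι β : Type*} [DecidableEq ι] (h : ι → β → β) :
    ∀ (L : List ι) (a : ι → β), L.Nodup → ∀ j,
      L.foldl (fun a j => Function.update a j (h j (a j))) a j =
        if j ∈ L then h j (a j) else a j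
  | [], a, _, j => by simp
  | i :: L, a, hL, j => by
    rw [List.nodup_cons] at hL
    rw [List.foldl_cons, foldl_update h L _ hL.2]
    by_cases hj : j = i
    · subst hj
      simp [hL.1]
    · simp [hj]

/-- The variable read at step `j` of block `i`: first `z_{i,1}, …, z_{i,l}`, then `y_i`. -/
def blockVar {q l : ℕ} (p : Fin q × Fin (l + 1)) : Fin (q * (l + 1)) :=
  Fin.lastCases ⟨q * l + p.1, yIdx p.1⟩ (fun j => ⟨p.1 * l + j, zIdx p.1 j⟩) p.2

lemma blockVar_injective {q l : ℕ} : Function.Injective (@blockVar q l) := by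
  have hlt (i : Fin q) (j : Fin l) : (i : ℕ) * l + j < q * l :=
    calc (i : ℕ) * l + j < i * l + l := Nat.add_lt_add_left j.isLt _
      _ = (i + 1) * l := by ring
      _ ≤ q * l := Nat.mul_le_mul_right l i.isLt
  rintro ⟨i, j⟩ ⟨i', j'⟩ h
  induction j using Fin.lastCases with
  | last =>
    induction j' using Fin.lastCases with
    | last =>
      simp only [blockVar, Fin.lastCases_last, Fin.mk.injEq, Nat.add_left_cancel_iff] at h
      simp [Fin.ext h]
    | cast j' =>
      simp only [blockVar, Fin.lastCases_last, Fin.lastCases_castSucc, Fin.mk.injEq] at h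
      have := hlt i' j'
      omega
  | cast j =>
    induction j' using Fin.lastCases with
    | last =>
      simp only [blockVar, Fin.lastCases_last, Fin.lastCases_castSucc, Fin.mk.injEq] at h
      have := hlt i j
      omega
    | cast j' =>
      simp only [blockVar, Fin.lastCases_castSucc, Fin.mk.injEq] at h
      have hpair : (i, j) = (i', j') := finProdFinEquiv.injective <| by
        ext
        simp only [finProdFinEquiv_apply_val]
        linarith
      simp only [Prod.mk.injEq] at hpair
      rw [hpair.1, hpair.2]

/-- The order reading the blocks `z_{i,1}, …, z_{i,l}, y_i` one after another. -/
noncomputable def blockOrder (q l : ℕ) : Equiv.Perm (Fin (q * (l + 1))) :=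
  Equiv.ofBijective (fun p => blockVar (finProdFinEquiv.symm p))
    (Finite.injective_iff_bijective.mp
      (blockVar_injective.comp finProdFinEquiv.symm.injective))

/-- One step of the simulation of layer `t` of `M`: an address bit updates the stored address
through `g`, a value bit is fed to `M` as the variable with the stored address. -/
def simStep {k q d : ℕ} (M : KOBDD k q d) (l : ℕ) (g : Fin q → Bool → Bool → Bool) (t : Fin k)
    (p : Fin q × Fin (l + 1)) (s : (Fin l → Bool) × Fin d) (b : Bool) : (Fin l → Bool) × Fin d :=
  Fin.lastCases
    (s.1, if h : binVal l s.1 < q then M.tr t (M.ord.symm ⟨binVal l s.1, h⟩) s.2 b else s.2)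
    (fun j => (Function.update s.1 j (g p.1 (s.1 j) b), s.2)) p.2

/-- An encoding of pairs of an address and a state of `M`. -/
noncomputable def stateEquiv (l d : ℕ) : (Fin l → Bool) × Fin d ≃ Fin (2 ^ l * d) :=
  Fintype.equivFinOfCardEq (by simp)

/-- The kOBDD simulating `M` on reordered inputs, with address update rule `g`. -/
noncomputable def simulation {k q d : ℕ} (M : KOBDD k q d) (l : ℕ)
    (g : Fin q → Bool → Bool → Bool) : KOBDD k (q * (l + 1)) (2 ^ l * d) where
  ord := blockOrder q l
  tr t p s b := stateEquiv l d
    (M.simStep l g t (finProdFinEquiv.symm p) ((stateEquiv l d).symm s) b)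
  start := stateEquiv l d (fun _ => false, M.start)
  acc := Finset.univ.filter fun s => ((stateEquiv l d).symm s).2 ∈ M.acc

lemma simulation_layerRun {k q d : ℕ} (M : KOBDD k q d) (l : ℕ) (g : Fin q → Bool → Bool → Bool)
    (t : Fin k) (x : Fin (q * (l + 1)) → Bool) (s : (Fin l → Bool) × Fin d) :
    (M.simulation l g).layerRun t (stateEquiv l d s) x =
      stateEquiv l d ((List.finRange q).foldl (fun s i =>
        (List.finRange (l + 1)).foldl
          (fun s j => M.simStep l g t (i, j) s (x (blockVar (i, j)))) s) s) := by
  rw [layerRun, List.foldl_hom (stateEquiv l d)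
    (g₁ := fun s p => M.simStep l g t (finProdFinEquiv.symm p) s (x (blockOrder q l p)))
    (fun s p => by simp [simulation]), foldl_finRange_mul]
  simp only [blockOrder, Equiv.ofBijective_apply, Equiv.symm_apply_apply]

lemma foldl_simStep {k q d : ℕ} (M : KOBDD k q d) (l : ℕ) (g : Fin q → Bool → Bool → Bool)
    (t : Fin k) (x : Fin (q * (l + 1)) → Bool) (i : Fin q) (s : (Fin l → Bool) × Fin d)
    (a : Fin l → Bool) (ha : ∀ j, g i (s.1 j) (zOf q l x i j) = a j) (r : Fin q)
    (hr : binVal l a = r) :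
    (List.finRange (l + 1)).foldl
        (fun s j => M.simStep l g t (i, j) s (x (blockVar (i, j)))) s =
      (a, M.tr t (M.ord.symm r) s.2 (yOf q l x i)) := by
  have hz : (List.finRange l).foldl
      (fun s j => M.simStep l g t (i, j.castSucc) s (x (blockVar (i, j.castSucc)))) s =
        (a, s.2) := by
    have hfold : ∀ (L : List (Fin l)) (s : (Fin l → Bool) × Fin d),
        L.foldl (fun s j => M.simStep l g t (i, j.castSucc) s (x (blockVar (i, j.castSucc)))) s =
          (L.foldl (fun a j => Function.update a j (g i (a j) (zOf q l x i j))) s.1, s.2) := by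
      intro L
      induction L with
      | nil => simp
      | cons j L ih =>
        intro s
        rw [List.foldl_cons, ih]
        simp [simStep, blockVar, zOf]
    rw [hfold]
    refine Prod.ext (funext fun j => ?_) rfl
    dsimp only
    rw [foldl_update (fun j b => g i b (zOf q l x i j)) _ _ (List.nodup_finRange l)]
    simp [ha]
  simp only [List.finRange_succ_last, List.foldl_append, List.foldl_map, List.foldl_cons,
    List.foldl_nil, hz]
  simp [simStep, blockVar, yOf, hr]

/-- If the address register, updated through `g`, runs through the addresses `A i` and these are
a permutation `σ`, then the simulation behaves as `M` on the reordered values. -/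
lemma simulation_accepts {k q d : ℕ} (M : KOBDD k q d) (hM : M.Commutative) (l : ℕ)
    (g : Fin q → Bool → Bool → Bool) (x : Fin (q * (l + 1)) → Bool) (A : Fin q → Fin l → Bool)
    (hA : ∀ (i : Fin q) (a : Fin l → Bool), (∀ i' : Fin q, (i' : ℕ) + 1 = i → a = A i') →
      ∀ j, g i (a j) (zOf q l x i j) = A i j)
    (σ : Equiv.Perm (Fin q)) (hσ : ∀ i, binVal l (A i) = σ i) :
    (M.simulation l g).Accepts x ↔ M.Accepts fun j => yOf q l x (σ.symm j) := by
  have hlayer (t : Fin k) (s : Fin (2 ^ l * d)) :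
      ((stateEquiv l d).symm ((M.simulation l g).layerRun t s x)).2 =
        M.layerRun t ((stateEquiv l d).symm s).2 fun j => yOf q l x (σ.symm j) := by
    obtain ⟨s, rfl⟩ := (stateEquiv l d).surjective s
    rw [simulation_layerRun, ← hM σ]
    simp only [Equiv.symm_apply_apply]
    refine (foldl_finRange_rel (fun n (s : (Fin l → Bool) × Fin d) s' =>
      (∀ i : Fin q, (i : ℕ) + 1 = n → s.1 = A i) ∧ s.2 = s') _ _ s s.2
      ⟨by simp, rfl⟩ ?_).2
    rintro i s _ ⟨hs, rfl⟩
    rw [M.foldl_simStep l g t x i s (A i) (hA i s.1 hs) (σ i) (hσ i)]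
    refine ⟨fun i' h => ?_, rfl⟩
    rw [Fin.ext (Nat.succ_injective h)]
  have hfinal : ((stateEquiv l d).symm ((M.simulation l g).final x)).2 =
      M.final fun j => yOf q l x (σ.symm j) := by
    refine foldl_finRange_rel (fun _ s s' => ((stateEquiv l d).symm s).2 = s') _ _ _ _ ?_ ?_
    · simp [simulation]
    · rintro t s _ rfl
      exact hlayer t s
  rw [Accepts, Accepts, ← hfinal]
  simp [simulation]

lemma simulation_representsPartial {k q d : ℕ} (M : KOBDD k q d) (hM : M.Commutative)
    {f : (Fin q → Bool) → Bool} (hf : M.Represents f) (l : ℕ) (g : Fin q → Bool → Bool → Bool)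
    (A : (Fin (q * (l + 1)) → Bool) → Fin q → Fin l → Bool)
    (hA : ∀ x (i : Fin q) (a : Fin l → Bool), (∀ i' : Fin q, (i' : ℕ) + 1 = i → a = A x i') →
      ∀ j, g i (a j) (zOf q l x i j) = A x i j) :
    (M.simulation l g).RepresentsPartial (ordPartial q l f fun x i => binVal l (A x i)) := by
  intro x b hb
  unfold ordPartial at hb
  split_ifs at hb with h
  rw [← Option.some.inj hb, ← hf]
  exact M.simulation_accepts hM l g x (A x) (hA x) h.choose h.choose_spec

end KOBDD

lemma xorZ_of_val_eq_zero {q l : ℕ} (x : Fin (q * (l + 1)) → Bool) (i : Fin q) (hi : (i : ℕ) = 0)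
    (j : Fin l) : xorZ q l x i j = zOf q l x i j := by
  have hle (i' : Fin q) : i' ≤ i ↔ i' = i := by
    rw [Fin.le_def, Fin.ext_iff]
    omega
  cases h : zOf q l x i j <;> simp [xorZ, hle, Finset.filter_and, Finset.filter_eq', h]

lemma xorZ_of_val_add_one_eq {q l : ℕ} (x : Fin (q * (l + 1)) → Bool) (i i' : Fin q)
    (hi : (i' : ℕ) + 1 = i) (j : Fin l) :
    xorZ q l x i j = xor (xorZ q l x i' j) (zOf q l x i j) := by
  have hle (r : Fin q) : r ≤ i ↔ r = i ∨ r ≤ i' := by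
    rw [Fin.le_def, Fin.le_def, Fin.ext_iff]
    omega
  have hnot : ¬ i ≤ i' := by
    rw [Fin.le_def]
    omega
  unfold xorZ
  cases h : zOf q l x i j
  · have hset : Finset.univ.filter (fun r : Fin q => r ≤ i ∧ zOf q l x r j = true) =
        Finset.univ.filter (fun r : Fin q => r ≤ i' ∧ zOf q l x r j = true) := by
      ext r
      simp only [Finset.mem_filter, Finset.mem_univ, true_and, hle]
      grind
    rw [hset, Bool.xor_false]
  · have hset : Finset.univ.filter (fun r : Fin q => r ≤ i ∧ zOf q l x r j = true) =
        insert i (Finset.univ.filter (fun r : Fin q => r ≤ i' ∧ zOf q l x r j = true)) := by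
      ext r
      simp only [Finset.mem_filter, Finset.mem_univ, true_and, hle, Finset.mem_insert]
      grind
    rw [hset, Finset.card_insert_of_notMem (by simp [hnot]), Bool.xor_true, ← decide_not,
      decide_eq_decide]
    omega

/-- from a commutative kOBDD of width `d` for `f` one gets kOBDDs of
width at most `2^{⌈log₂ q⌉}·d ≤ 2qd` for `ord(f)` and `⊕ord(f)`. -/
theorem stmt1 (k q d : ℕ) (hk : 1 ≤ k) (hq : 2 ≤ q)
    (f : (Fin q → Bool) → Bool)
    (M : KOBDD k q d) (hrep : M.Represents f) (hcomm : M.Commutative) :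
    (∃ w : ℕ, w ≤ 2 ^ Nat.clog 2 q * d ∧
        ∃ N : KOBDD k (q * (Nat.clog 2 q + 1)) w, N.RepresentsPartial (ordF q f)) ∧
    (∃ w : ℕ, w ≤ 2 ^ Nat.clog 2 q * d ∧
        ∃ N : KOBDD k (q * (Nat.clog 2 q + 1)) w, N.RepresentsPartial (xorOrdF q f)) := by
  refine ⟨⟨_, le_rfl, M.simulation _ fun _ _ b => b, ?_⟩,
    ⟨_, le_rfl, M.simulation _ fun i a b => if (i : ℕ) = 0 then b else xor a b, ?_⟩⟩
  · exact M.simulation_representsPartial hcomm hrep _ _ (zOf q _) fun _ _ _ _ _ => rfl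
  · refine M.simulation_representsPartial hcomm hrep _ _ (xorZ q _) fun x i a ha j => ?_
    by_cases hi : (i : ℕ) = 0
    · rw [if_pos hi, xorZ_of_val_eq_zero x i hi]
    · obtain ⟨i', hi'⟩ : ∃ i' : Fin q, (i' : ℕ) + 1 = i :=
        ⟨⟨i - 1, by omega⟩, Nat.sub_add_cancel (Nat.pos_of_ne_zero hi)⟩
      rw [if_neg hi, ha i' hi', xorZ_of_val_add_one_eq x i i' hi']
end

section
/- Let q ≥ 2 be an integer and f : {0,1}^q → {0,1} a Boolean function. If there is a commutative quantum OBDD of width w representing f with bounded error, then there is a quantum OBDD of width 2^{⌈log₂ w⌉ + ⌈log₂ q⌉} (in particular of width at most 4·w·q) representing the partial function ⊕ord(f) with bounded error (with the same error parameter ε). -/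
set_option maxHeartbeats 1000000
set_option linter.unusedVariables false
/-- A quantum OBDD of width `w` over `n` Boolean variables. -/
structure QOBDD (n w : ℕ) where
  ord : Equiv.Perm (Fin n)
  G : Fin n → Bool → Matrix.unitaryGroup (Fin w) ℂ
  start : Fin w
  acc : Finset (Fin w)

namespace QOBDD

noncomputable def finalVec {n w : ℕ} (M : QOBDD n w) (x : Fin n → Bool) : Fin w → ℂ :=
  (List.finRange n).foldl
    (fun ψ i => Matrix.mulVec (M.G i (x (M.ord i)) : Matrix (Fin w) (Fin w) ℂ) ψ)
    (Pi.single M.start 1)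

noncomputable def acceptProb {n w : ℕ} (M : QOBDD n w) (x : Fin n → Bool) : ℝ :=
  ∑ j ∈ M.acc, Complex.normSq (M.finalVec x j)

/-- `M` represents the total function `f` with margin `ε`. -/
def Represents {n w : ℕ} (M : QOBDD n w) (ε : ℝ) (f : (Fin n → Bool) → Bool) : Prop :=
  ∀ x, (f x = true → 1 / 2 + ε ≤ M.acceptProb x) ∧
       (f x = false → M.acceptProb x ≤ 1 / 2 - ε)

/-- `M` represents the partial function `F` with margin `ε`. -/
def RepresentsPartial {n w : ℕ} (M : QOBDD n w) (ε : ℝ)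
    (F : (Fin n → Bool) → Option Bool) : Prop :=
  ∀ x, (F x = some true → 1 / 2 + ε ≤ M.acceptProb x) ∧
       (F x = some false → M.acceptProb x ≤ 1 / 2 - ε)

/-- The QOBDD obtained by reordering: order `π`, matrices `G' i = G (ord⁻¹ (π i))`. -/
def reorder {n w : ℕ} (M : QOBDD n w) (π : Equiv.Perm (Fin n)) : QOBDD n w :=
  ⟨π, fun i => M.G (M.ord.symm (π i)), M.start, M.acc⟩

end QOBDD
namespace XorOrd

open Matrix

/-- A relation between two state machines that is preserved by every step holds at the end. -/
lemma foldl_finRange_rel {α β : Type*} {n : ℕ} (s : α → Fin n → α) (t : β → Fin n → β)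
    (P : ℕ → α → β → Prop) {a : α} {b : β} (h0 : P 0 a b)
    (hstep : ∀ (i : Fin n) a b, P i a b → P (i + 1) (s a i) (t b i)) :
    P n ((List.finRange n).foldl s a) ((List.finRange n).foldl t b) := by
  induction n with
  | zero => simpa using h0
  | succ n ih =>
    simp only [List.finRange_succ_last, List.foldl_append, List.foldl_map, List.foldl_cons,
      List.foldl_nil]
    exact hstep (Fin.last n) _ _ (ih _ _ fun i a b h => hstep i.castSucc a b h)

lemma foldl_finRange_mul {α : Type*} {m n : ℕ} (s : α → Fin (m * n) → α) (a : α) :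
    (List.finRange (m * n)).foldl s a =
      (List.finRange m).foldl (fun a i =>
        (List.finRange n).foldl (fun a j => s a (finProdFinEquiv (i, j))) a) a := by
  rw [← List.ofFn_id, List.ofFn_mul, List.foldl_flatten]
  simp only [List.ofFn_eq_map, List.foldl_map, id_eq]
  congr! 6 with _ i _ j
  congr 1
  ext
  simp [finProdFinEquiv, mul_comm, add_comm]

/-- Bitwise exclusive or with `m`, as a permutation of bit strings. -/
def xorPerm {ι : Type*} (m : ι → Bool) : Equiv.Perm (ι → Bool) where
  toFun b k := xor (b k) (m k)
  invFun b k := xor (b k) (m k)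
  left_inv b := by simp
  right_inv b := by simp

/-- The bit string with `t` at position `j` and zeros elsewhere. -/
def bitAt {l : ℕ} (j : Fin l) (t : Bool) : Fin l → Bool := fun k => decide (k = j) && t

lemma foldl_xorPerm_bitAt {l : ℕ} (z a : Fin l → Bool) (L : List (Fin l)) (hL : L.Nodup) :
    L.foldl (fun a j => xorPerm (bitAt j (z j)) a) a =
      fun k => xor (a k) (decide (k ∈ L) && z k) := by
  induction L generalizing a with
  | nil => simp
  | cons j L ih =>
    obtain ⟨hj, hL⟩ := List.nodup_cons.mp hL
    rw [List.foldl_cons, ih _ hL]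
    funext k
    by_cases hk : k = j
    · subst hk
      simp [xorPerm, bitAt, hj]
    · simp [xorPerm, bitAt, hk]

/-- A work register of dimension `w + d` together with an `l`-bit address register. -/
abbrev Reg (w d l : ℕ) := (Fin w ⊕ Fin d) × (Fin l → Bool)

/-- The state with work register `u` (padded by zeros) and classical address `a`. -/
def regVec {w : ℕ} (d : ℕ) {l : ℕ} (u : Fin w → ℂ) (a : Fin l → Bool) : Reg w d l → ℂ :=
  fun p => if p.2 = a then Sum.elim u 0 p.1 else 0

/-- The unitary applying `xorPerm m` to the address register. -/
noncomputable def addrXorU (w d : ℕ) {l : ℕ} (m : Fin l → Bool) : unitaryGroup (Reg w d l) ℂ :=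
  ⟨Equiv.Perm.permMatrix ℂ ((Equiv.refl _).prodCongr (xorPerm m)), by
    rw [mem_unitaryGroup_iff, star_eq_conjTranspose, conjTranspose_permMatrix, ← permMatrix_mul,
      inv_mul_cancel, permMatrix_one]⟩

lemma addrXorU_mulVec {w d l : ℕ} (m a : Fin l → Bool) (u : Fin w → ℂ) :
    (addrXorU w d m : Matrix _ _ ℂ) *ᵥ regVec d u a = regVec d u (xorPerm m a) := by
  ext ⟨p, b⟩
  have h : xorPerm m b = a ↔ b = xorPerm m a := (xorPerm m).eq_symm_apply.symm
  simp [addrXorU, permMatrix_mulVec, regVec, h]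

/-- The unitary applying `U a` to the work register, controlled by the address `a`. -/
noncomputable def controlledU {w : ℕ} (d : ℕ) {l : ℕ}
    (U : (Fin l → Bool) → unitaryGroup (Fin w) ℂ) : unitaryGroup (Reg w d l) ℂ :=
  ⟨blockDiagonal fun a => fromBlocks (U a : Matrix (Fin w) (Fin w) ℂ) 0 0 1, by
    have h (a) : (U a : Matrix (Fin w) (Fin w) ℂ) * (U a : Matrix (Fin w) (Fin w) ℂ)ᴴ = 1 :=
      mem_unitaryGroup_iff.mp (U a).2
    rw [mem_unitaryGroup_iff, star_eq_conjTranspose, blockDiagonal_conjTranspose,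
      ← blockDiagonal_mul]
    simp only [fromBlocks_conjTranspose, fromBlocks_multiply, h]
    simp
    exact blockDiagonal_one⟩

lemma controlledU_mulVec {w d l : ℕ} (U : (Fin l → Bool) → unitaryGroup (Fin w) ℂ)
    (a : Fin l → Bool) (u : Fin w → ℂ) :
    (controlledU d U : Matrix _ _ ℂ) *ᵥ regVec d u a =
      regVec d ((U a : Matrix (Fin w) (Fin w) ℂ) *ᵥ u) a := by
  ext ⟨p, b⟩
  have hsum : ((controlledU d U : Matrix _ _ ℂ) *ᵥ regVec d u a) (p, b) =
      if b = a then (fromBlocks (U a : Matrix (Fin w) (Fin w) ℂ) 0 0 1 *ᵥ Sum.elim u (0 : Fin d → ℂ)) p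
      else 0 := by
    simp only [controlledU, mulVec, dotProduct, regVec, blockDiagonal_apply,
      Fintype.sum_prod_type_right]
    by_cases hb : b = a
    · subst hb
      rw [Finset.sum_eq_single b]
      · simp
      · intro c _ hc
        simp [hc]
      · simp
    · rw [if_neg hb]
      refine Finset.sum_eq_zero fun c _ => Finset.sum_eq_zero fun r _ => ?_
      by_cases hc : c = a
      · subst hc; simp [hb]
      · simp [hc]
  rw [hsum, fromBlocks_mulVec]
  cases p <;> simp [regVec, Function.comp_def, ← Pi.zero_def]

lemma sum_normSq_regVec {w d l : ℕ} (acc : Finset (Fin w)) (u : Fin w → ℂ) (a : Fin l → Bool) :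
    ∑ p ∈ acc.map .inl ×ˢ Finset.univ, Complex.normSq (regVec d u a p) =
      ∑ j ∈ acc, Complex.normSq (u j) := by
  rw [Finset.sum_product, Finset.sum_map]
  refine Finset.sum_congr rfl fun j _ => ?_
  simp [regVec, apply_ite Complex.normSq]

/-- The transport of a unitary along a bijection of the index types. -/
noncomputable def reindexU {m n : Type*} [Fintype m] [DecidableEq m] [Fintype n] [DecidableEq n]
    (e : m ≃ n) (U : unitaryGroup m ℂ) : unitaryGroup n ℂ :=
  ⟨reindex e e (U : Matrix m m ℂ), by
    rw [mem_unitaryGroup_iff, star_eq_conjTranspose, conjTranspose_reindex]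
    have h : (U : Matrix m m ℂ) * (U : Matrix m m ℂ)ᴴ = 1 := mem_unitaryGroup_iff.mp U.2
    simp [submatrix_mul_equiv, h]⟩

lemma reindexU_mulVec {m n : Type*} [Fintype m] [DecidableEq m] [Fintype n] [DecidableEq n]
    (e : m ≃ n) (U : unitaryGroup m ℂ) (v : m → ℂ) :
    (reindexU e U : Matrix n n ℂ) *ᵥ (v ∘ e.symm) = ((U : Matrix m m ℂ) *ᵥ v) ∘ e.symm := by
  simp [reindexU, submatrix_mulVec_equiv, Function.comp_assoc]

/-- The variable read at step `c` of block `i`: first the address bits `z_{i,c}`, then `y_i`. -/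
def blockVar {q l : ℕ} (p : Fin q × Fin (l + 1)) : Fin (q * (l + 1)) :=
  Fin.lastCases ⟨q * l + p.1, yIdx p.1⟩ (fun j => ⟨p.1 * l + j, zIdx p.1 j⟩) p.2

lemma blockVar_injective {q l : ℕ} : Function.Injective (blockVar (q := q) (l := l)) := by
  have hlt (i : Fin q) (j : Fin l) : (i : ℕ) * l + j < q * l := by
    have := Nat.mul_le_mul_right l (Nat.succ_le_of_lt i.isLt)
    have := j.isLt
    rw [Nat.succ_mul] at *
    omega
  rintro ⟨i, c⟩ ⟨i', c'⟩ h
  induction c using Fin.lastCases with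
  | last =>
    induction c' using Fin.lastCases with
    | last =>
      simp only [blockVar, Fin.lastCases_last, Fin.mk.injEq, Nat.add_left_cancel_iff] at h
      rw [Fin.ext h]
    | cast j' =>
      have := hlt i' j'
      simp only [blockVar, Fin.lastCases_last, Fin.lastCases_castSucc, Fin.mk.injEq] at h
      omega
  | cast j =>
    induction c' using Fin.lastCases with
    | last =>
      have := hlt i j
      simp only [blockVar, Fin.lastCases_last, Fin.lastCases_castSucc, Fin.mk.injEq] at h
      omega
    | cast j' =>
      simp only [blockVar, Fin.lastCases_castSucc, Fin.mk.injEq] at h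
      have h' : finProdFinEquiv (i, j) = finProdFinEquiv (i', j') := by
        ext
        simpa [finProdFinEquiv, mul_comm, add_comm] using h
      obtain ⟨rfl, rfl⟩ := Prod.mk.inj (finProdFinEquiv.injective h')
      rfl

/-- The block order `z_{1,1}, …, z_{1,l}, y_1, z_{2,1}, …, z_{q,l}, y_q`. -/
noncomputable def blockOrd (q l : ℕ) : Equiv.Perm (Fin (q * (l + 1))) :=
  Equiv.ofBijective (fun k => blockVar (finProdFinEquiv.symm k))
    (Finite.injective_iff_bijective.mp
      (blockVar_injective.comp finProdFinEquiv.symm.injective))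

lemma blockOrd_apply {q l : ℕ} (p : Fin q × Fin (l + 1)) :
    blockOrd q l (finProdFinEquiv p) = blockVar p := by
  simp only [blockOrd, Equiv.ofBijective_apply, Equiv.symm_apply_apply]

/-- The exclusive or of the first `k` address words. -/
def prefixXor (q l : ℕ) (x : Fin (q * (l + 1)) → Bool) (k : ℕ) (j : Fin l) : Bool :=
  decide ((Finset.univ.filter
    (fun i : Fin q => (i : ℕ) < k ∧ zOf q l x i j = true)).card % 2 = 1)

lemma prefixXor_zero (q l : ℕ) (x : Fin (q * (l + 1)) → Bool) :
    prefixXor q l x 0 = fun _ => false := by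
  funext j
  simp [prefixXor]

lemma prefixXor_succ_eq_xorZ {q l : ℕ} (x : Fin (q * (l + 1)) → Bool) (i : Fin q) :
    prefixXor q l x (i + 1) = xorZ q l x i := by
  funext j
  simp only [prefixXor, xorZ, Nat.lt_succ_iff, Fin.val_fin_le]

lemma prefixXor_succ {q l : ℕ} (x : Fin (q * (l + 1)) → Bool) (i : Fin q) (j : Fin l) :
    prefixXor q l x (i + 1) j = xor (prefixXor q l x i j) (zOf q l x i j) := by
  cases hz : zOf q l x i j with
  | false =>
    have : ∀ i' : Fin q, ((i' : ℕ) < i + 1 ∧ zOf q l x i' j = true) ↔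
        ((i' : ℕ) < i ∧ zOf q l x i' j = true) := by
      intro i'
      rcases eq_or_ne i' i with rfl | h
      · simp [hz]
      · have := Fin.val_ne_of_ne h
        simp only [and_congr_left_iff]
        omega
    simp only [prefixXor, this, Bool.xor_false]
  | true =>
    have : Finset.univ.filter (fun i' : Fin q => (i' : ℕ) < i + 1 ∧ zOf q l x i' j = true) =
        insert i (Finset.univ.filter
          (fun i' : Fin q => (i' : ℕ) < i ∧ zOf q l x i' j = true)) := by
      ext i'
      rcases eq_or_ne i' i with rfl | h
      · simp [hz]
      · have := Fin.val_ne_of_ne h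
        simp only [Finset.mem_filter, Finset.mem_univ, true_and, Finset.mem_insert, h, false_or,
          and_congr_left_iff]
        omega
    rw [prefixXor, prefixXor, this, Finset.card_insert_of_notMem (by simp), Bool.xor_true,
      ← decide_not]
    exact decide_eq_decide.mpr (by omega)

/-- The gate of `M` selected by the address `a`, the identity if there is no such variable. -/
noncomputable def selectedGate {q w : ℕ} (M : QOBDD q w) {l : ℕ} (t : Bool) (a : Fin l → Bool) :
    unitaryGroup (Fin w) ℂ :=
  if h : binVal l a < q then M.G (M.ord.symm ⟨binVal l a, h⟩) t else 1

/-- The gate at step `c` of a block: address bits update the address register, and the final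
value bit triggers the selected gate. -/
noncomputable def blockGate {q w : ℕ} (M : QOBDD q w) (d : ℕ) {l : ℕ} (c : Fin (l + 1))
    (t : Bool) : unitaryGroup (Reg w d l) ℂ :=
  Fin.lastCases (motive := fun _ => unitaryGroup (Reg w d l) ℂ)
    (controlledU d (selectedGate M t)) (fun j => addrXorU w d (bitAt j t)) c

/-- The QOBDD for the reordered function, simulating `M` on a work and an address register. -/
noncomputable def simulate {q w d l W : ℕ} (M : QOBDD q w) (e : Reg w d l ≃ Fin W) :
    QOBDD (q * (l + 1)) W where
  ord := blockOrd q l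
  G k t := reindexU e (blockGate M d (finProdFinEquiv.symm k).2 t)
  start := e (.inl M.start, fun _ => false)
  acc := (M.acc.map .inl ×ˢ Finset.univ).map e.toEmbedding

lemma foldl_block {q w d l W : ℕ} (M : QOBDD q w) (e : Reg w d l ≃ Fin W)
    (x : Fin (q * (l + 1)) → Bool) (i : Fin q) (u : Fin w → ℂ) :
    (List.finRange (l + 1)).foldl
      (fun ψ c => ((simulate M e).G (finProdFinEquiv (i, c))
        (x ((simulate M e).ord (finProdFinEquiv (i, c)))) : Matrix (Fin W) (Fin W) ℂ) *ᵥ ψ)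
      (regVec d u (prefixXor q l x i) ∘ e.symm) =
    regVec d ((selectedGate M (yOf q l x i) (xorZ q l x i) : Matrix _ _ ℂ) *ᵥ u)
      (xorZ q l x i) ∘ e.symm := by
  have hz : ∀ (L : List (Fin l)) (a : Fin l → Bool),
      L.foldl (fun ψ j => (reindexU e (addrXorU w d (bitAt j (zOf q l x i j))) :
        Matrix (Fin W) (Fin W) ℂ) *ᵥ ψ) (regVec d u a ∘ e.symm) =
      regVec d u (L.foldl (fun a j => xorPerm (bitAt j (zOf q l x i j)) a) a) ∘ e.symm := by
    intro L
    induction L with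
    | nil => simp
    | cons j L ih =>
      intro a
      rw [List.foldl_cons, reindexU_mulVec, addrXorU_mulVec, ih, List.foldl_cons]
  have ha : (List.finRange l).foldl (fun a j => xorPerm (bitAt j (zOf q l x i j)) a)
      (prefixXor q l x i) = xorZ q l x i := by
    rw [foldl_xorPerm_bitAt _ _ _ (List.nodup_finRange l), ← prefixXor_succ_eq_xorZ]
    funext j
    simp [prefixXor_succ]
  simp only [List.finRange_succ_last, List.foldl_append, List.foldl_map, List.foldl_cons,
    List.foldl_nil, simulate, Equiv.symm_apply_apply, blockOrd_apply, blockGate, blockVar,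
    Fin.lastCases_castSucc, Fin.lastCases_last]
  refine Eq.trans (congrArg _ (hz (List.finRange l) _)) ?_
  rw [ha]
  exact (reindexU_mulVec _ _ _).trans (by rw [controlledU_mulVec]; rfl)

lemma simulate_acceptProb {q w d l W : ℕ} (M : QOBDD q w) (e : Reg w d l ≃ Fin W)
    (x : Fin (q * (l + 1)) → Bool) (σ : Equiv.Perm (Fin q))
    (hσ : ∀ i, addrXor q l x i = (σ i : ℕ)) :
    (simulate M e).acceptProb x =
      (M.reorder σ).acceptProb fun j => yOf q l x (σ.symm j) := by
  have hfinal : (simulate M e).finalVec x =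
      regVec d ((M.reorder σ).finalVec fun j => yOf q l x (σ.symm j)) (prefixXor q l x q) ∘
        e.symm := by
    rw [QOBDD.finalVec, foldl_finRange_mul]
    refine foldl_finRange_rel _ _
      (fun k (ψ : Fin W → ℂ) u => ψ = regVec d u (prefixXor q l x k) ∘ e.symm) ?_ ?_
    · rw [prefixXor_zero]
      ext k
      obtain ⟨⟨p, b⟩, rfl⟩ := e.surjective k
      by_cases hb : b = fun _ => false <;> cases p <;>
        simp [simulate, regVec, QOBDD.reorder, Pi.single_apply, hb]
    · rintro i _ u rfl
      have hgate : selectedGate M (yOf q l x i) (xorZ q l x i) =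
          M.G (M.ord.symm (σ i)) (yOf q l x i) := by
        have h : binVal l (xorZ q l x i) = σ i := hσ i
        rw [selectedGate, dif_pos (h ▸ (σ i).isLt)]
        congr 3
      rw [foldl_block, hgate, prefixXor_succ_eq_xorZ]
      simp [QOBDD.reorder]
  rw [QOBDD.acceptProb, hfinal]
  simp only [simulate, Finset.sum_map, Equiv.coe_toEmbedding, Function.comp_apply,
    Equiv.symm_apply_apply]
  exact sum_normSq_regVec _ _ _

end XorOrd

/-- from a commutative bounded-error QOBDD of width `w` for `f` one gets a
bounded-error QOBDD of width `2^{⌈log₂ w⌉+⌈log₂ q⌉}` for `⊕ord(f)`, with the same margin. -/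
theorem stmt3 (q w : ℕ) (hq : 2 ≤ q) (f : (Fin q → Bool) → Bool) (ε : ℝ) (hε : 0 < ε)
    (M : QOBDD q w) (hrep : M.Represents ε f)
    (hcomm : ∀ π : Equiv.Perm (Fin q), (M.reorder π).Represents ε f) :
    ∃ N : QOBDD (q * (Nat.clog 2 q + 1)) (2 ^ (Nat.clog 2 w + Nat.clog 2 q)),
      N.RepresentsPartial ε (xorOrdF q f) := by
  have hw : w ≤ 2 ^ Nat.clog 2 w := Nat.le_pow_clog one_lt_two w
  have e : XorOrd.Reg w (2 ^ Nat.clog 2 w - w) (Nat.clog 2 q) ≃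
      Fin (2 ^ (Nat.clog 2 w + Nat.clog 2 q)) :=
    Fintype.equivOfCardEq (by simp [Nat.add_sub_cancel' hw, pow_add])
  refine ⟨XorOrd.simulate M e, fun x => ?_⟩
  rw [xorOrdF, ordPartial]
  split_ifs with h
  · rw [XorOrd.simulate_acceptProb M e x _ h.choose_spec]
    simpa using hcomm h.choose fun j => yOf q (Nat.clog 2 q) x (h.choose.symm j)
  · simp
end

section
/- There is an absolute constant c with the following property. Let n ≥ 1 and w ≥ 2 be integers, let f : {0,1}ⁿ → {0,1}, and suppose there are integers C₁,…,C_n such that for all x ∈ {0,1}ⁿ one has f(x) = 1 if and only if Σ_{i=1}^n C_i·x_i ≡ 0 (mod w). Then for every ε ∈ (0, 1/2) there is a commutative quantum OBDD of width at most c·(1/ε)·ln(2w) that accepts every x with f(x) = 1 with probability 1 and accepts every x with f(x) = 0 with probability at most ε. In particular, f has a commutative bounded-error quantum OBDD of width O(log w). -/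
set_option maxHeartbeats 1000000
set_option linter.unusedVariables false
open Finset in
/-- Exponential moment bound for a mean-zero family of reals in `[-1, 1]`. -/
lemma sum_exp_mul_le_of_sum_eq_zero {ι : Type*} [Fintype ι] (X : ι → ℝ) (hX : ∀ i, |X i| ≤ 1)
    (h0 : ∑ i, X i = 0) (r : ℝ) :
    ∑ i, Real.exp (X i * r) ≤ Fintype.card ι * Real.exp (r ^ 2 / 2) := by
  calc ∑ i, Real.exp (X i * r) ≤ ∑ i, (Real.cosh r + X i * Real.sinh r) :=
        sum_le_sum fun i _ => Real.exp_mul_le_cosh_add_mul_sinh (hX i) r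
    _ = Fintype.card ι * Real.cosh r := by
        rw [sum_add_distrib, ← sum_mul, h0]; simp
    _ ≤ _ := by gcongr; exact Real.cosh_le_exp_half_sq r

lemma ZMod.norm_stdAddChar {w : ℕ} [NeZero w] (a : ZMod w) : ‖ZMod.stdAddChar a‖ = 1 :=
  AddChar.norm_apply _ _

open Finset in
lemma ZMod.sum_exp_re_stdAddChar_le {w : ℕ} [NeZero w] (t : ℕ) {s : ZMod w} (hs : s ≠ 0)
    {u : ℂ} (hu : ‖u‖ = 1) (r : ℝ) :
    ∑ k : Fin t → ZMod w, Real.exp ((u * ∑ j, ZMod.stdAddChar (k j * s)).re * r) ≤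
      ∑ _k : Fin t → ZMod w, Real.exp (t * (r ^ 2 / 2)) := by
  have hX : ∀ a : ZMod w, |(u * ZMod.stdAddChar (a * s)).re| ≤ 1 := fun a =>
    (Complex.abs_re_le_norm _).trans (by rw [norm_mul, hu, ZMod.norm_stdAddChar, one_mul])
  have h0 : ∑ a : ZMod w, (u * ZMod.stdAddChar (a * s)).re = 0 := by
    rw [← Complex.re_sum, ← mul_sum,
      AddChar.sum_mulShift s (ZMod.isPrimitive_stdAddChar w), if_neg hs]
    simp
  have hb := sum_exp_mul_le_of_sum_eq_zero _ hX h0 r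
  calc _ = ∑ k : Fin t → ZMod w, ∏ j, Real.exp ((u * ZMod.stdAddChar (k j * s)).re * r) := by
        refine sum_congr rfl fun k _ => ?_
        rw [← Real.exp_sum, mul_sum, Complex.re_sum, sum_mul]
    _ = (∑ a : ZMod w, Real.exp ((u * ZMod.stdAddChar (a * s)).re * r)) ^ t := by
        rw [sum_pow', Fintype.piFinset_univ]
    _ ≤ (Fintype.card (ZMod w) * Real.exp (r ^ 2 / 2)) ^ t :=
        pow_le_pow_left₀ (sum_nonneg fun _ _ => (Real.exp_pos _).le) hb t
    _ = _ := by
        rw [mul_pow, ← Real.exp_nat_mul]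
        simp

open Finset in
/-- Some `t` residues have all their nontrivial character sums of squared modulus at most
`ε * t ^ 2`, as soon as `t` is of order `log w / ε`. -/
lemma ZMod.exists_normSq_sum_stdAddChar_le {w : ℕ} [NeZero w] (t : ℕ) {ε : ℝ} (hε : 0 < ε)
    (ht : 4 * Real.log (4 * w) ≤ ε * t) :
    ∃ k : Fin t → ZMod w, ∀ s : ZMod w, s ≠ 0 →
      Complex.normSq (∑ j, ZMod.stdAddChar (k j * s)) ≤ ε * (t : ℝ) ^ 2 := by
  have hw : (0 : ℝ) < w := by exact_mod_cast Nat.pos_of_ne_zero (NeZero.ne w)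
  obtain ⟨r, hr, hr2⟩ : ∃ r : ℝ, 0 < r ∧ r ^ 2 = ε / 2 :=
    ⟨√(ε / 2), by positivity, Real.sq_sqrt (by positivity)⟩
  have hI : ∀ m : ℕ, ‖Complex.I ^ m‖ = 1 := fun m => by simp
  obtain ⟨k, -, hk⟩ : ∃ k ∈ (univ : Finset (Fin t → ZMod w)),
      ∑ p ∈ (univ.erase (0 : ZMod w)) ×ˢ range 4,
        Real.exp ((Complex.I ^ p.2 * ∑ j, ZMod.stdAddChar (k j * p.1)).re * r) ≤
      4 * w * Real.exp (t * (r ^ 2 / 2)) := by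
    refine exists_le_of_sum_le univ_nonempty ?_
    rw [sum_comm]
    calc _ ≤ ∑ p ∈ (univ.erase (0 : ZMod w)) ×ˢ range 4,
          ∑ _k : Fin t → ZMod w, Real.exp (t * (r ^ 2 / 2)) := sum_le_sum fun p hp =>
            ZMod.sum_exp_re_stdAddChar_le t (ne_of_mem_erase (mem_product.1 hp).1) (hI _) r
      _ ≤ ∑ p ∈ (univ : Finset (ZMod w)) ×ˢ range 4,
          ∑ _k : Fin t → ZMod w, Real.exp (t * (r ^ 2 / 2)) :=
            sum_le_sum_of_subset_of_nonneg (product_subset_product_left (erase_subset _ _))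
              fun _ _ _ => by positivity
      _ = _ := by
            rw [sum_comm]
            refine sum_congr rfl fun _ _ => ?_
            simp [mul_comm]
  refine ⟨k, fun s hs => ?_⟩
  have key : ∀ m < 4, (Complex.I ^ m * ∑ j, ZMod.stdAddChar (k j * s)).re ≤ t * r := by
    intro m hm
    have h1 := (single_le_sum (f := fun p : ZMod w × ℕ =>
      Real.exp ((Complex.I ^ p.2 * ∑ j, ZMod.stdAddChar (k j * p.1)).re * r))
      (fun _ _ => (Real.exp_pos _).le)
      (show (s, m) ∈ (univ.erase (0 : ZMod w)) ×ˢ range 4 by simp [hs, hm])).trans hk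
    rw [← Real.exp_log (show (0 : ℝ) < 4 * w by positivity), ← Real.exp_add,
      Real.exp_le_exp] at h1
    refine le_of_mul_le_mul_right (h1.trans ?_) hr
    rw [mul_assoc, ← sq, hr2]
    linarith
  have k0 := key 0 (by norm_num)
  have k1 := key 1 (by norm_num)
  have k2 := key 2 (by norm_num)
  have k3 := key 3 (by norm_num)
  generalize ∑ j, ZMod.stdAddChar (k j * s) = z at k0 k1 k2 k3
  simp [pow_succ] at k0 k1 k2 k3
  have h1 : z.re ^ 2 ≤ (t * r) ^ 2 := sq_le_sq' (by linarith) k0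
  have h2 : z.im ^ 2 ≤ (t * r) ^ 2 := sq_le_sq' (by linarith) k3
  rw [mul_pow, hr2] at h1 h2
  rw [Complex.normSq_apply]
  linarith

/-- A unitary matrix (the discrete Fourier transform) whose first column is constant. -/
lemma Matrix.exists_unitary_const_col (m : ℕ) :
    ∃ U : Matrix.unitaryGroup (Fin (m + 1)) ℂ,
      ∀ j, (U : Matrix (Fin (m + 1)) (Fin (m + 1)) ℂ) j 0 = ((√(m + 1 : ℝ))⁻¹ : ℝ) := by
  suffices ∃ U : Matrix.unitaryGroup (ZMod (m + 1)) ℂ,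
      ∀ j, (U : Matrix (ZMod (m + 1)) (ZMod (m + 1)) ℂ) j 0 = ((√(m + 1 : ℝ))⁻¹ : ℝ) from this
  have hc : ((√(m + 1 : ℝ))⁻¹ : ℝ) * ((√(m + 1 : ℝ))⁻¹ : ℝ) = ((m : ℂ) + 1)⁻¹ := by
    rw [← Complex.ofReal_mul, ← mul_inv, Real.mul_self_sqrt (by positivity)]
    push_cast
    rfl
  refine ⟨⟨Matrix.of fun i j => ((√(m + 1 : ℝ))⁻¹ : ℝ) * ZMod.stdAddChar (j * i),
    Matrix.mem_unitaryGroup_iff.2 ?_⟩, fun j => by simp⟩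
  ext i k
  have hterm : ∀ j : ZMod (m + 1),
      (((√(m + 1 : ℝ))⁻¹ : ℝ) * ZMod.stdAddChar (j * i) : ℂ) *
        star (((√(m + 1 : ℝ))⁻¹ : ℝ) * ZMod.stdAddChar (j * k) : ℂ) =
      ((m : ℂ) + 1)⁻¹ * ZMod.stdAddChar (j * (i - k)) := by
    intro j
    rw [mul_sub, sub_eq_add_neg, AddChar.map_add_eq_mul, AddChar.map_neg_eq_conj, ← hc]
    simp
    ring
  rw [Matrix.mul_apply]
  simp only [Matrix.star_apply, Matrix.of_apply, hterm]
  rw [← Finset.mul_sum, AddChar.sum_mulShift _ (ZMod.isPrimitive_stdAddChar _)]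
  have hm : (m : ℂ) + 1 ≠ 0 := by exact_mod_cast Nat.succ_ne_zero m
  by_cases h : i = k
  · subst h
    simp [ZMod.card, hm]
  · simp [h, sub_eq_zero]

/-- The diagonal unitary with entries `ψ (k j * d)`. -/
noncomputable def phaseGate {w t : ℕ} [NeZero w] (k : Fin t → ZMod w) (d : ZMod w) :
    Matrix.unitaryGroup (Fin t) ℂ :=
  ⟨Matrix.diagonal fun j => ZMod.stdAddChar (k j * d), Matrix.mem_unitaryGroup_iff.2 <| by
    rw [Matrix.star_eq_conjTranspose, Matrix.diagonal_conjTranspose,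
      Matrix.diagonal_mul_diagonal, ← Matrix.diagonal_one]
    congr 1
    ext j
    simp [Complex.mul_conj, Complex.normSq_eq_norm_sq]⟩

lemma phaseGate_zero {w t : ℕ} [NeZero w] (k : Fin t → ZMod w) : phaseGate k 0 = 1 :=
  Subtype.ext <| by simp [phaseGate]

lemma phaseGate_add {w t : ℕ} [NeZero w] (k : Fin t → ZMod w) (a b : ZMod w) :
    phaseGate k (a + b) = phaseGate k a * phaseGate k b :=
  Subtype.ext <| by simp [phaseGate, mul_add, AddChar.map_add_eq_mul]

lemma foldl_mulVec_conj_phaseGate {w t : ℕ} [NeZero w] (k : Fin t → ZMod w)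
    (U : Matrix.unitaryGroup (Fin t) ℂ) {ι : Type*} (d : ι → ZMod w) (l : List ι)
    (v : Fin t → ℂ) :
    l.foldl (fun ψ i => Matrix.mulVec
      ((U⁻¹ * phaseGate k (d i) * U : Matrix.unitaryGroup (Fin t) ℂ) :
        Matrix (Fin t) (Fin t) ℂ) ψ) v =
    Matrix.mulVec ((U⁻¹ * phaseGate k (l.map d).sum * U : Matrix.unitaryGroup (Fin t) ℂ) :
        Matrix (Fin t) (Fin t) ℂ) v := by
  induction l generalizing v with
  | nil => simp [phaseGate_zero]
  | cons i l ih =>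
    rw [List.foldl_cons, ih, Matrix.mulVec_mulVec, ← Matrix.UnitaryGroup.mul_val,
      List.map_cons, List.sum_cons, add_comm, phaseGate_add]
    congr 2
    group

lemma conj_phaseGate_apply_zero {w m : ℕ} [NeZero w] (k : Fin (m + 1) → ZMod w)
    {U : Matrix.unitaryGroup (Fin (m + 1)) ℂ}
    (hU : ∀ j, (U : Matrix (Fin (m + 1)) (Fin (m + 1)) ℂ) j 0 = ((√(m + 1 : ℝ))⁻¹ : ℝ))
    (s : ZMod w) :
    ((U⁻¹ * phaseGate k s * U : Matrix.unitaryGroup (Fin (m + 1)) ℂ) :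
      Matrix (Fin (m + 1)) (Fin (m + 1)) ℂ) 0 0 =
    (((m + 1 : ℝ)⁻¹ : ℝ) : ℂ) * ∑ j, ZMod.stdAddChar (k j * s) := by
  have hc : (√(m + 1 : ℝ))⁻¹ * (√(m + 1 : ℝ))⁻¹ = (m + 1 : ℝ)⁻¹ := by
    rw [← mul_inv, Real.mul_self_sqrt (by positivity)]
  rw [Matrix.UnitaryGroup.mul_val, Matrix.UnitaryGroup.mul_val, Matrix.UnitaryGroup.inv_val,
    Matrix.mul_apply, Finset.mul_sum]
  refine Finset.sum_congr rfl fun j _ => ?_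
  rw [phaseGate, Matrix.mul_diagonal, Matrix.star_apply, hU, ← hc, Complex.ofReal_mul]
  simp only [RCLike.star_def, Complex.conj_ofReal]
  ring

/-- The fingerprinting QOBDD: variable `i` multiplies phases by `ψ (k j * d i)` in a conjugated
basis. -/
noncomputable def QOBDD.fingerprint {n w m : ℕ} [NeZero w] (k : Fin (m + 1) → ZMod w)
    (U : Matrix.unitaryGroup (Fin (m + 1)) ℂ) (d : Fin n → ZMod w) : QOBDD n (m + 1) where
  ord := 1
  G i b := U⁻¹ * phaseGate k (if b then d i else 0) * U
  start := 0
  acc := {0}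

lemma QOBDD.acceptProb_reorder_fingerprint {n w m : ℕ} [NeZero w] (k : Fin (m + 1) → ZMod w)
    {U : Matrix.unitaryGroup (Fin (m + 1)) ℂ}
    (hU : ∀ j, (U : Matrix (Fin (m + 1)) (Fin (m + 1)) ℂ) j 0 = ((√(m + 1 : ℝ))⁻¹ : ℝ))
    (d : Fin n → ZMod w) (π : Equiv.Perm (Fin n)) (x : Fin n → Bool) :
    ((QOBDD.fingerprint k U d).reorder π).acceptProb x =
      Complex.normSq (∑ j, ZMod.stdAddChar (k j * ∑ i, if x i then d i else 0)) /
        (m + 1 : ℝ) ^ 2 := by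
  have hsum : ((List.finRange n).map fun i => if x (π i) then d (π i) else 0).sum =
      ∑ i, if x i then d i else 0 := by
    rw [← List.ofFn_eq_map, List.sum_ofFn]
    exact Equiv.sum_comp π fun i => if x i then d i else 0
  have hvec := foldl_mulVec_conj_phaseGate k U (fun i => if x (π i) then d (π i) else 0)
    (List.finRange n) (Pi.single 0 1)
  rw [hsum] at hvec
  have hfinal : ((QOBDD.fingerprint k U d).reorder π).finalVec x = _ := hvec
  have hacc : ((QOBDD.fingerprint k U d).reorder π).acc = {0} := rfl
  rw [QOBDD.acceptProb, hacc, Finset.sum_singleton, hfinal, Matrix.mulVec_single_one,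
    Matrix.col_apply, conj_phaseGate_apply_zero k hU, Complex.normSq_mul, Complex.normSq_ofReal]
  rw [div_eq_inv_mul, sq, mul_inv]

/-- a function with a linear characteristic polynomial mod `w` has a
commutative one-sided-error quantum OBDD of width `O((1/ε)·ln(2w))`. -/
theorem stmt5 :
    ∃ c : ℝ, 0 < c ∧
      ∀ (n w : ℕ), 1 ≤ n → 2 ≤ w →
        ∀ (f : (Fin n → Bool) → Bool) (C : Fin n → ℤ),
          (∀ x, f x = true ↔ (∑ i, C i * (if x i then 1 else 0)) % (w : ℤ) = 0) →
          ∀ ε : ℝ, 0 < ε → ε < 1 / 2 →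
            ∃ W : ℕ, (W : ℝ) ≤ c * (1 / ε) * Real.log (2 * (w : ℝ)) ∧
              ∃ M : QOBDD n W,
                ∀ (π : Equiv.Perm (Fin n)) (x : Fin n → Bool),
                  (f x = true → (M.reorder π).acceptProb x = 1) ∧
                  (f x = false → (M.reorder π).acceptProb x ≤ ε) := by
  refine ⟨9, by norm_num, fun n w _ hw f C hf ε hε hε2 => ?_⟩
  have : NeZero w := ⟨by omega⟩
  have hwR : (2 : ℝ) ≤ w := by exact_mod_cast hw
  have hlog1 : 1 ≤ Real.log (2 * w) := by
    rw [Real.le_log_iff_exp_le (by positivity)]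
    linarith [Real.exp_one_lt_d9]
  have hlog4 : Real.log (4 * w) ≤ 2 * Real.log (2 * w) := by
    rw [← Real.log_rpow (by positivity)]
    refine Real.log_le_log (by positivity) ?_
    norm_num
    nlinarith
  have hlog4_pos : 0 < Real.log (4 * w) := Real.log_pos (by linarith)
  obtain ⟨m, hm⟩ : ∃ m, ⌈4 * Real.log (4 * w) / ε⌉₊ = m + 1 :=
    Nat.exists_eq_succ_of_ne_zero (Nat.ceil_pos.2 (by positivity)).ne'
  have hlow : 4 * Real.log (4 * w) ≤ ε * ((m + 1 : ℕ) : ℝ) := by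
    have h := Nat.le_ceil (4 * Real.log (4 * w) / ε)
    rw [hm, div_le_iff₀ hε] at h
    linarith
  obtain ⟨k, hk⟩ := ZMod.exists_normSq_sum_stdAddChar_le (w := w) (m + 1) hε hlow
  obtain ⟨U, hU⟩ := Matrix.exists_unitary_const_col m
  refine ⟨m + 1, ?_, QOBDD.fingerprint k U fun i => (C i : ZMod w), fun π x => ?_⟩
  · have h := Nat.ceil_lt_add_one (show 0 ≤ 4 * Real.log (4 * w) / ε by positivity)
    rw [hm] at h
    refine h.le.trans ?_
    rw [div_add_one hε.ne', mul_one_div, div_mul_eq_mul_div]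
    gcongr
    linarith
  rw [QOBDD.acceptProb_reorder_fingerprint k hU]
  have hcast : (∑ i, if x i then (C i : ZMod w) else 0) =
      ((∑ i, C i * (if x i then 1 else 0) : ℤ) : ZMod w) := by
    push_cast
    exact Finset.sum_congr rfl fun i _ => by split_ifs <;> simp
  have hzero : f x = true ↔ (∑ i, if x i then (C i : ZMod w) else 0) = 0 := by
    rw [hf, hcast, ZMod.intCast_zmod_eq_zero_iff_dvd, Int.dvd_iff_emod_eq_zero]
  have hpos : (0 : ℝ) < (m + 1 : ℝ) ^ 2 := by positivity
  constructor
  · intro h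
    rw [hzero.1 h]
    simp only [mul_zero, AddChar.map_zero_eq_one, Finset.sum_const, Finset.card_univ,
      Fintype.card_fin, nsmul_eq_mul, mul_one, Complex.normSq_natCast]
    push_cast
    rw [← sq, div_self hpos.ne']
  · intro h
    rw [div_le_iff₀ hpos]
    have hne : (∑ i, if x i then (C i : ZMod w) else 0) ≠ 0 := fun h0 => by
      simp [hzero.2 h0] at h
    exact_mod_cast hk _ hne
end

section
/- There is a constant c such that for every integer q ≥ 1 there is a quantum OBDD of width at most c·q² that represents the partial function ⊕ord(EQ_q) with bounded error; namely, it accepts every input in the domain with value 1 with probability 1 and accepts every input in the domain with value 0 with probability at most 1/3. In terms of the input length n = 2q(⌈log₂ 2q⌉+1), the width is O(n²/log²n). -/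
set_option maxHeartbeats 1000000
set_option linter.unusedVariables false
/-- The equality function `EQ_q` on `2q` variables. -/
def EQF (q : ℕ) : (Fin (2 * q) → Bool) → Bool := fun x =>
  decide (∀ i : Fin q,
    x ⟨(i : ℕ), by have := i.isLt; omega⟩ = x ⟨q + (i : ℕ), by have := i.isLt; omega⟩)
/-- The sign `(-1)^b` of a bit. -/
def bitSign (b : Bool) : ℝ := if b then -1 else 1

lemma bitSign_mul_self (b : Bool) : bitSign b * bitSign b = 1 := by
  cases b <;> simp [bitSign]

lemma bitSign_and_mul_bitSign_and (a b c : Bool) :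
    bitSign (a && b) * bitSign (a && c) = bitSign (a && xor b c) := by
  cases a <;> cases b <;> cases c <;> simp [bitSign]

lemma prod_mul_self_eq_one {ι : Type*} (s : Finset ι) (f : ι → ℝ) (hf : ∀ i, f i * f i = 1) :
    (∏ i ∈ s, f i) * ∏ i ∈ s, f i = 1 := by
  rw [← Finset.prod_mul_distrib]
  exact Finset.prod_eq_one fun i _ => hf i

/-- A nontrivial character of `{0,1}^q` sums to zero. -/
lemma sum_prod_bitSign_and_eq_zero {q : ℕ} {u : Fin q → Bool} (hu : ∃ j, u j = true) :
    ∑ v : Fin q → Bool, ∏ j, bitSign (v j && u j) = 0 := by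
  have h := Finset.prod_univ_sum (fun _ : Fin q => (Finset.univ : Finset Bool))
    (fun j b => bitSign (b && u j))
  rw [Fintype.piFinset_univ] at h
  rw [← h]
  obtain ⟨j, hj⟩ := hu
  exact Finset.prod_eq_zero (Finset.mem_univ j) (by simp [hj, bitSign])

lemma exp_mul_of_mul_self_eq_one {c : ℝ} (hc : c * c = 1) (a : ℝ) :
    Real.exp (a * c) = Real.cosh a + c * Real.sinh a := by
  rcases mul_self_eq_one_iff.mp hc with rfl | rfl
  · rw [mul_one, one_mul, Real.cosh_add_sinh]
  · rw [mul_neg_one, neg_one_mul, ← sub_eq_add_neg, Real.cosh_sub_sinh]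

/-- The exponential moment of the character sum of `t` uniformly random vectors. -/
lemma sum_exp_character_sum (t : ℕ) {q : ℕ} {u : Fin q → Bool} (hu : ∃ j, u j = true) (a : ℝ) :
    ∑ h : Fin t → Fin q → Bool, Real.exp (a * ∑ k, ∏ j, bitSign (h k j && u j)) =
      (2 ^ q * Real.cosh a) ^ t := by
  have h1 : ∑ v : Fin q → Bool, Real.exp (a * ∏ j, bitSign (v j && u j)) =
      2 ^ q * Real.cosh a := by
    simp_rw [exp_mul_of_mul_self_eq_one
      (prod_mul_self_eq_one Finset.univ _ fun j => bitSign_mul_self _) a]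
    rw [Finset.sum_add_distrib, ← Finset.sum_mul, sum_prod_bitSign_and_eq_zero hu]
    simp
  rw [← h1, Fintype.sum_pow]
  refine Finset.sum_congr rfl fun h _ => ?_
  rw [Finset.mul_sum, Real.exp_sum]

/-- There are `12 q` vectors in `{0,1}^q` whose character sums are small at every nonzero `u`. -/
lemma exists_small_bias (q : ℕ) (hq : 1 ≤ q) :
    ∃ h : Fin (12 * q) → Fin q → Bool, ∀ u : Fin q → Bool, (∃ j, u j = true) →
      (∑ k, ∏ j, bitSign (h k j && u j)) ^ 2 ≤ (12 * q : ℝ) ^ 2 / 3 := by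
  by_contra! hcon
  set r : ℝ := Real.sqrt 3 with hr
  have hr3 : r ^ 2 = 3 := Real.sq_sqrt (by norm_num)
  have hr0 : 0 < r := Real.sqrt_pos.mpr (by norm_num)
  set a : ℝ := r / 3 with ha
  have ha0 : 0 < a := by positivity
  have ha2 : a ^ 2 = 1 / 3 := by rw [ha, div_pow, hr3]; norm_num
  let S : (Fin (12 * q) → Fin q → Bool) → (Fin q → Bool) → ℝ :=
    fun h u => ∑ k, ∏ j, bitSign (h k j && u j)
  let N : Finset (Fin q → Bool) := Finset.univ.filter fun u => ∃ j, u j = true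
  have hlow : ∀ h : Fin (12 * q) → Fin q → Bool, Real.exp (4 * q) ≤
      ∑ u ∈ N, (Real.exp (a * S h u) + Real.exp (-a * S h u)) := by
    intro h
    obtain ⟨u, hu, hb⟩ := hcon h
    refine le_trans ?_ (Finset.single_le_sum (f := fun u =>
      Real.exp (a * S h u) + Real.exp (-a * S h u)) (fun u _ => by positivity)
      (Finset.mem_filter.mpr ⟨Finset.mem_univ u, hu⟩))
    have habs : 4 * (q : ℝ) ≤ |a * S h u| := by
      refine le_trans (le_abs_self _) (sq_le_sq.mp ?_)
      rw [mul_pow, mul_pow, ha2]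
      have hb' : (12 * q : ℝ) ^ 2 / 3 < S h u ^ 2 := hb
      linarith
    rcases le_abs.mp habs with h' | h'
    · have := Real.exp_le_exp.mpr h'
      have := Real.exp_pos (-a * S h u)
      linarith
    · rw [← neg_mul] at h'
      have := Real.exp_le_exp.mpr h'
      have := Real.exp_pos (a * S h u)
      linarith
  have htot := Finset.sum_le_sum fun h (_ : h ∈ Finset.univ) => hlow h
  rw [Finset.sum_comm] at htot
  have hup : ∀ u ∈ N, ∑ h : Fin (12 * q) → Fin q → Bool,
      (Real.exp (a * S h u) + Real.exp (-a * S h u)) = 2 * (2 ^ q * Real.cosh a) ^ (12 * q) := by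
    intro u hu
    rw [Finset.sum_add_distrib, sum_exp_character_sum _ (Finset.mem_filter.mp hu).2,
      sum_exp_character_sum _ (Finset.mem_filter.mp hu).2, Real.cosh_neg]
    ring
  rw [Finset.sum_congr rfl hup, Finset.sum_const, Finset.sum_const, nsmul_eq_mul,
    nsmul_eq_mul] at htot
  have hN : (N.card : ℝ) ≤ 2 ^ q := by
    have : N.card ≤ 2 ^ q := by simpa using Finset.card_le_univ N
    exact_mod_cast this
  have hcosh : Real.cosh a ^ (12 * q) ≤ Real.exp (2 * q) := by
    calc Real.cosh a ^ (12 * q) ≤ Real.exp (a ^ 2 / 2) ^ (12 * q) :=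
          pow_le_pow_left₀ (Real.cosh_pos a).le (Real.cosh_le_exp_half_sq a) _
      _ = Real.exp (2 * q) := by
          rw [← Real.exp_nat_mul, ha2]; congr 1; push_cast; ring
  have hcard : ((Finset.univ : Finset (Fin (12 * q) → Fin q → Bool)).card : ℝ) =
      (2 ^ q) ^ (12 * q) := by simp
  rw [hcard, mul_pow] at htot
  have hP : (0 : ℝ) < (2 ^ q) ^ (12 * q) := by positivity
  have h1 : Real.exp (4 * q) ≤ 2 ^ q * (2 * Real.exp (2 * q)) := by
    refine le_of_mul_le_mul_left (htot.trans ?_) hP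
    calc (N.card : ℝ) * (2 * ((2 ^ q) ^ (12 * q) * Real.cosh a ^ (12 * q)))
        ≤ 2 ^ q * (2 * ((2 ^ q) ^ (12 * q) * Real.exp (2 * q))) := by gcongr
      _ = _ := by ring
  have h2 : Real.exp (4 * q) = Real.exp (2 * q) * Real.exp (2 * q) := by
    rw [← Real.exp_add]; ring_nf
  have h3 : Real.exp (2 * q) ≤ 2 ^ q * 2 := by
    refine le_of_mul_le_mul_right ?_ (Real.exp_pos (2 * q))
    rw [← h2]; linarith
  have h4 : (2 : ℝ) ^ q * 2 ≤ 4 ^ q := by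
    have : (2 : ℝ) ≤ 2 ^ q := by simpa using pow_le_pow_right₀ (one_le_two (α := ℝ)) hq
    calc (2 : ℝ) ^ q * 2 ≤ 2 ^ q * 2 ^ q := by gcongr
      _ = 4 ^ q := by rw [← mul_pow]; norm_num
  have h5 : (4 : ℝ) ^ q < Real.exp (2 * q) := by
    have he : (4 : ℝ) < Real.exp 2 := by
      have := Real.exp_one_gt_d9
      have h : Real.exp 2 = Real.exp 1 * Real.exp 1 := by rw [← Real.exp_add]; norm_num
      nlinarith
    have : Real.exp (2 * q) = Real.exp 2 ^ q := by rw [← Real.exp_nat_mul]; ring_nf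
    rw [this]
    exact pow_lt_pow_left₀ he (by norm_num) (by omega)
  linarith

lemma foldl_finRange_eq {V : Type*} (n : ℕ) (step : V → Fin n → V) (S : ℕ → V)
    (hS : ∀ i : Fin n, step (S i) i = S (i + 1)) :
    (List.finRange n).foldl step (S 0) = S n := by
  induction n with
  | zero => simp
  | succ n ih =>
    rw [List.finRange_succ_last, List.foldl_append, List.foldl_map,
      ih (fun v i => step v i.castSucc) fun i => hS i.castSucc]
    exact hS (Fin.last n)

/-- The matrix of `ψ ↦ (i ↦ s i * ψ (π i))`, a permutation with signs. -/
def signedPerm {ι : Type*} [DecidableEq ι] (s : ι → ℝ) (π : Equiv.Perm ι) : Matrix ι ι ℂ :=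
  fun i j => if π i = j then (s i : ℂ) else 0

lemma signedPerm_mulVec {ι : Type*} [Fintype ι] [DecidableEq ι] (s : ι → ℝ) (π : Equiv.Perm ι)
    (ψ : ι → ℂ) : (signedPerm s π).mulVec ψ = fun i => (s i : ℂ) * ψ (π i) := by
  ext i
  simp [Matrix.mulVec, dotProduct, signedPerm, ite_mul]

lemma signedPerm_mem_unitaryGroup {ι : Type*} [Fintype ι] [DecidableEq ι] (s : ι → ℝ)
    (hs : ∀ i, s i * s i = 1) (π : Equiv.Perm ι) :
    signedPerm s π ∈ Matrix.unitaryGroup ι ℂ := by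
  rw [Matrix.mem_unitaryGroup_iff]
  ext i j
  rw [Matrix.mul_apply]
  by_cases hij : i = j
  · subst hij
    simp [signedPerm, Matrix.star_apply, ← Complex.ofReal_mul, hs]
  · simp [signedPerm, Matrix.star_apply, hij, Ne.symm hij]

/-- Every unit vector is a column of a unitary matrix. -/
lemma exists_unitary_column {ι : Type*} [Fintype ι] [DecidableEq ι] (k₀ : ι)
    (v : ι → ℂ) (hv : ∑ k, Complex.normSq (v k) = 1) :
    ∃ U ∈ Matrix.unitaryGroup ι ℂ, ∀ k, U k k₀ = v k := by
  let w : EuclideanSpace ℂ ι := WithLp.toLp 2 v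
  have hw : ‖w‖ = 1 := by
    rw [EuclideanSpace.norm_eq, Real.sqrt_eq_one, ← hv]
    exact Finset.sum_congr rfl fun k _ => (Complex.normSq_eq_norm_sq _).symm
  have hon : Orthonormal ℂ (({k₀} : Set ι).domRestrict fun _ => w) := by
    rw [orthonormal_iff_ite]
    rintro ⟨i, hi⟩ ⟨j, hj⟩
    obtain rfl : i = k₀ := hi
    obtain rfl : j = i := hj
    simpa [inner_self_eq_norm_sq_to_K] using Or.inl hw
  obtain ⟨b, hb⟩ := hon.exists_orthonormalBasis_extension_of_card_eq (by simp)
  refine ⟨(EuclideanSpace.basisFun ι ℂ).toBasis.toMatrix b,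
    (EuclideanSpace.basisFun ι ℂ).toMatrix_orthonormalBasis_mem_unitary b, fun k => ?_⟩
  simp [Module.Basis.toMatrix_apply, hb k₀ rfl, w]

/-- A QOBDD may be specified over any finite index type, with every gate conjugated by a fixed
unitary, which then acts only before the first and after the last gate. -/
lemma exists_QOBDD_of_gates {ι : Type*} [Fintype ι] [DecidableEq ι] {n : ℕ}
    (ord : Equiv.Perm (Fin n)) (D : Fin n → Bool → Matrix ι ι ℂ)
    (hD : ∀ i b, D i b ∈ Matrix.unitaryGroup ι ℂ) (V : Matrix ι ι ℂ)
    (hV : V ∈ Matrix.unitaryGroup ι ℂ) (start : ι) (acc : Finset ι) :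
    ∃ M : QOBDD n (Fintype.card ι), ∀ (x : Fin n → Bool) (S : ℕ → ι → ℂ),
      (S 0 = fun i => V i start) →
      (∀ i : Fin n, (D i (x (ord i))).mulVec (S i) = S (i + 1)) →
      M.acceptProb x = ∑ j ∈ acc, Complex.normSq (((star V).mulVec (S n)) j) := by
  let e := Fintype.equivFin ι
  let G : Fin n → Bool → Matrix ι ι ℂ := fun i b => star V * D i b * V
  have hG : ∀ i b, G i b ∈ Matrix.unitaryGroup ι ℂ := fun i b =>
    mul_mem (mul_mem (Unitary.star_mem hV) (hD i b)) hV
  have hVV : V * star V = 1 := Matrix.mem_unitaryGroup_iff.mp hV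
  have hVV' : star V * V = 1 := Matrix.mem_unitaryGroup_iff'.mp hV
  have hsub : ∀ i b, (G i b).submatrix e.symm e.symm ∈
      Matrix.unitaryGroup (Fin (Fintype.card ι)) ℂ := fun i b => by
    rw [Matrix.mem_unitaryGroup_iff, Matrix.star_eq_conjTranspose, Matrix.conjTranspose_submatrix,
      Matrix.submatrix_mul_equiv, ← Matrix.star_eq_conjTranspose,
      Matrix.mem_unitaryGroup_iff.mp (hG i b), Matrix.submatrix_one_equiv]
  refine ⟨⟨ord, fun i b => ⟨_, hsub i b⟩, e start, acc.map e.toEmbedding⟩,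
    fun x S h0 hS => ?_⟩
  have hfin : QOBDD.finalVec ⟨ord, fun i b => ⟨_, hsub i b⟩, e start,
      acc.map e.toEmbedding⟩ x = ((star V).mulVec (S n)) ∘ e.symm := by
    have hinit : (Pi.single (e start) 1 : Fin (Fintype.card ι) → ℂ) =
        ((star V).mulVec (S 0)) ∘ e.symm := by
      have : S 0 = V.mulVec (Pi.single start 1) := by
        rw [h0]; ext i; simp
      rw [this, Matrix.mulVec_mulVec, hVV', Matrix.one_mulVec]
      ext i
      simp [Pi.single_apply, Equiv.symm_apply_eq]
    unfold QOBDD.finalVec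
    simp only
    rw [hinit]
    refine foldl_finRange_eq n _ (fun p => ((star V).mulVec (S p)) ∘ e.symm) fun i => ?_
    rw [Matrix.submatrix_mulVec_equiv, Function.comp_assoc]
    simp only [Equiv.symm_symm, Equiv.symm_comp_self, Function.comp_id, G]
    rw [Matrix.mulVec_mulVec, Matrix.mul_assoc, Matrix.mul_assoc, hVV, Matrix.mul_one,
      ← Matrix.mulVec_mulVec, hS]
  unfold QOBDD.acceptProb
  rw [hfin]
  simp

/-- The interleaved variable order `z_{1,1},…,z_{1,l}, y_1, z_{2,1},…,z_{2,l}, y_2, …`. -/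
def interleaveFun (Q l : ℕ) (p : Fin (Q * (l + 1))) : Fin (Q * (l + 1)) :=
  if h : (p.modNat : ℕ) < l then
    ⟨p.divNat * l + (⟨p.modNat, h⟩ : Fin l), zIdx p.divNat ⟨p.modNat, h⟩⟩
  else ⟨Q * l + p.divNat, yIdx p.divNat⟩

lemma divNat_mul_add_modNat {Q m : ℕ} (p : Fin (Q * m)) :
    (p.divNat : ℕ) * m + p.modNat = p := by
  rw [Fin.coe_divNat, Fin.coe_modNat]
  exact Nat.div_add_mod' _ _

lemma interleaveFun_injective (Q l : ℕ) : Function.Injective (interleaveFun Q l) := by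
  intro p p' h
  have hp := divNat_mul_add_modNat p
  have hp' := divNat_mul_add_modNat p'
  have hb : ∀ i : Fin Q, (i : ℕ) * l + l ≤ Q * l := fun i => by
    rw [← Nat.succ_mul]; exact Nat.mul_le_mul_right l i.isLt
  have h1 := hb p.divNat
  have h2 := hb p'.divNat
  have hm := p.modNat.isLt
  have hm' := p'.modNat.isLt
  have key : (p.divNat : ℕ) = p'.divNat ∧ (p.modNat : ℕ) = p'.modNat := by
    unfold interleaveFun at h
    split_ifs at h with c c' c' <;> simp only [Fin.mk.injEq] at h
    · have hd : ∀ a b : ℕ, b < l → (a * l + b) / l = a := fun a b hb => by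
        rw [mul_comm, Nat.mul_add_div (by omega), Nat.div_eq_of_lt hb, add_zero]
      have e : (p.divNat : ℕ) = p'.divNat := by
        have e := congrArg (· / l) h
        simpa only [hd _ _ c, hd _ _ c'] using e
      rw [e] at h
      exact ⟨e, by omega⟩
    · omega
    · omega
    · omega
  exact Fin.ext (by rw [← hp, ← hp', key.1, key.2])

/-- `interleaveFun` as a permutation. -/
noncomputable def interleave (Q l : ℕ) : Equiv.Perm (Fin (Q * (l + 1))) :=
  Equiv.ofBijective _ (Finite.injective_iff_bijective.mp (interleaveFun_injective Q l))

/-- XOR the bit `b` into position `j` of the address register. -/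
def flipBit (K : Type*) {l : ℕ} (j : Fin l) (b : Bool) : Equiv.Perm (K × (Fin l → Bool)) :=
  Function.Involutive.toPerm (fun p => (p.1, Function.update p.2 j (xor (p.2 j) b))) fun p => by
    ext <;> simp

lemma flipBit_apply {K : Type*} {l : ℕ} (j : Fin l) (b : Bool) (k : K) (a : Fin l → Bool) :
    flipBit K j b (k, a) = (k, Function.update a j (xor (a j) b)) := rfl

/-- The gate reading the bit at position `p` of the interleaved order: address bits are XORed into
the register, value bits contribute the sign `s k address bit`. -/
noncomputable def gate {K : Type*} [DecidableEq K] (Q l : ℕ)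
    (s : K → (Fin l → Bool) → Bool → ℝ) (p : Fin (Q * (l + 1))) (b : Bool) :
    Matrix (K × (Fin l → Bool)) (K × (Fin l → Bool)) ℂ :=
  if h : (p.modNat : ℕ) < l then signedPerm (fun _ => 1) (flipBit K ⟨p.modNat, h⟩ b)
  else signedPerm (fun r => s r.1 r.2 b) 1

/-- Contents of the address register after `p` steps. -/
def register (Q l : ℕ) (x : Fin (Q * (l + 1)) → Bool) (p : ℕ) (j : Fin l) : Bool :=
  decide ((Finset.univ.filter fun i : Fin Q =>
    (i : ℕ) * (l + 1) + j < p ∧ zOf Q l x i j = true).card % 2 = 1)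

/-- State after `p` steps. -/
noncomputable def stateAt {K : Type*} (Q l : ℕ) (s : K → (Fin l → Bool) → Bool → ℝ)
    (v : K → ℂ) (x : Fin (Q * (l + 1)) → Bool) (p : ℕ) (r : K × (Fin l → Bool)) : ℂ :=
  if r.2 = register Q l x p then
    v r.1 * ((∏ i : Fin Q,
      if (i : ℕ) * (l + 1) + l < p then s r.1 (xorZ Q l x i) (yOf Q l x i) else 1 : ℝ) : ℂ)
  else 0

lemma stateAt_apply {K : Type*} (Q l : ℕ) (s : K → (Fin l → Bool) → Bool → ℝ)
    (v : K → ℂ) (x : Fin (Q * (l + 1)) → Bool) (p : ℕ) (k : K) (a : Fin l → Bool) :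
    stateAt Q l s v x p (k, a) = if a = register Q l x p then
      v k * ((∏ i : Fin Q,
        if (i : ℕ) * (l + 1) + l < p then s k (xorZ Q l x i) (yOf Q l x i) else 1 : ℝ) : ℂ)
      else 0 := rfl

lemma mul_add_lt_mul_add_iff {i i' j j' m : ℕ} (hj : j < m) (hj' : j' < m) :
    i * m + j < i' * m + j' ↔ i < i' ∨ i = i' ∧ j < j' := by
  rcases lt_trichotomy i i' with h | rfl | h
  · have := Nat.mul_le_mul_right m (Nat.succ_le_of_lt h)
    rw [Nat.succ_mul] at this
    constructor <;> intro <;> omega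
  · constructor <;> intro <;> omega
  · have := Nat.mul_le_mul_right m (Nat.succ_le_of_lt h)
    rw [Nat.succ_mul] at this
    constructor <;> intro <;> omega

lemma mul_add_lt_succ_iff {Q m : ℕ} (p : Fin (Q * m)) {j : ℕ} (h : (p.modNat : ℕ) = j)
    (i : Fin Q) : (i : ℕ) * m + j < p + 1 ↔ i = p.divNat ∨ (i : ℕ) * m + j < p := by
  have hm : 0 < m := (Nat.zero_le _).trans_lt p.modNat.isLt
  rw [Nat.lt_succ_iff_lt_or_eq, or_comm]
  refine or_congr_left ?_
  rw [← divNat_mul_add_modNat p, h, Nat.add_right_cancel_iff, Nat.mul_left_inj hm.ne', Fin.ext_iff]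

lemma register_succ_of_ne {Q l : ℕ} (x : Fin (Q * (l + 1)) → Bool) (p : Fin (Q * (l + 1)))
    (j : Fin l) (h : (p.modNat : ℕ) ≠ j) :
    register Q l x (p + 1) j = register Q l x p j := by
  unfold register
  congr 4
  ext i
  simp only [Finset.mem_filter, Finset.mem_univ, true_and]
  have : (i : ℕ) * (l + 1) + j ≠ p := by
    intro e
    apply h
    rw [Fin.coe_modNat, ← e, mul_comm, Nat.mul_add_mod, Nat.mod_eq_of_lt (by omega)]
  refine and_congr_left fun _ => ?_
  omega

lemma register_succ_of_eq {Q l : ℕ} (x : Fin (Q * (l + 1)) → Bool) (p : Fin (Q * (l + 1)))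
    (j : Fin l) (h : (p.modNat : ℕ) = j) :
    register Q l x (p + 1) j = xor (register Q l x p j) (zOf Q l x p.divNat j) := by
  have hp := divNat_mul_add_modNat p
  have hiff := fun i : Fin Q => mul_add_lt_succ_iff p h i
  have hnot : ¬ (p.divNat : ℕ) * (l + 1) + j < p := by omega
  unfold register
  cases hz : zOf Q l x p.divNat j
  · rw [Bool.xor_false]
    congr 4
    ext i
    simp only [Finset.mem_filter, Finset.mem_univ, true_and, hiff]
    constructor
    · rintro ⟨rfl | hi, hi'⟩
      · simp [hz] at hi'
      · exact ⟨hi, hi'⟩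
    · exact fun hi => ⟨Or.inr hi.1, hi.2⟩
  · have : (Finset.univ.filter fun i : Fin Q =>
          (i : ℕ) * (l + 1) + j < p + 1 ∧ zOf Q l x i j = true) =
        insert p.divNat (Finset.univ.filter fun i : Fin Q =>
          (i : ℕ) * (l + 1) + j < p ∧ zOf Q l x i j = true) := by
      ext i
      simp only [Finset.mem_filter, Finset.mem_univ, true_and, hiff, Finset.mem_insert]
      constructor
      · rintro ⟨rfl | hi, hi'⟩
        · exact Or.inl rfl
        · exact Or.inr ⟨hi, hi'⟩
      · rintro (rfl | hi)
        · exact ⟨Or.inl rfl, hz⟩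
        · exact ⟨Or.inr hi.1, hi.2⟩
    rw [this, Finset.card_insert_of_notMem (fun hi => hnot (Finset.mem_filter.mp hi).2.1),
      Bool.xor_true, ← decide_not]
    congr 1
    apply propext
    omega

lemma register_eq_xorZ {Q l : ℕ} (x : Fin (Q * (l + 1)) → Bool) (p : Fin (Q * (l + 1)))
    (h : ¬ (p.modNat : ℕ) < l) : register Q l x p = xorZ Q l x p.divNat := by
  have hp := divNat_mul_add_modNat p
  have hm := p.modNat.isLt
  ext j
  unfold register xorZ
  congr 4
  ext i
  simp only [Finset.mem_filter, Finset.mem_univ, true_and]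
  rw [← hp, mul_add_lt_mul_add_iff (by omega) hm, Fin.le_def]
  have := j.isLt
  constructor <;> rintro ⟨h1, h2⟩ <;> exact ⟨by omega, h2⟩

lemma gate_mem_unitaryGroup {K : Type*} [Fintype K] [DecidableEq K] (Q l : ℕ)
    (s : K → (Fin l → Bool) → Bool → ℝ) (hs : ∀ k a b, s k a b * s k a b = 1)
    (p : Fin (Q * (l + 1))) (b : Bool) :
    gate Q l s p b ∈ Matrix.unitaryGroup (K × (Fin l → Bool)) ℂ := by
  unfold gate
  split_ifs
  · exact signedPerm_mem_unitaryGroup _ (fun _ => one_mul 1) _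
  · exact signedPerm_mem_unitaryGroup _ (fun _ => hs _ _ _) _

lemma gate_mulVec_stateAt {K : Type*} [Fintype K] [DecidableEq K] (Q l : ℕ)
    (s : K → (Fin l → Bool) → Bool → ℝ) (v : K → ℂ) (x : Fin (Q * (l + 1)) → Bool)
    (p : Fin (Q * (l + 1))) :
    (gate Q l s p (x (interleave Q l p))).mulVec (stateAt Q l s v x p) =
      stateAt Q l s v x (p + 1) := by
  have hp := divNat_mul_add_modNat p
  have hm := p.modNat.isLt
  have hord : x (interleave Q l p) = x (interleaveFun Q l p) := rfl
  rw [hord]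
  unfold gate interleaveFun
  split_ifs with h
  · rw [signedPerm_mulVec]
    ext ⟨k, a⟩
    have hz : x ⟨p.divNat * l + (⟨p.modNat, h⟩ : Fin l), zIdx p.divNat ⟨p.modNat, h⟩⟩ =
      zOf Q l x p.divNat ⟨p.modNat, h⟩ := rfl
    rw [hz]
    set j : Fin l := ⟨p.modNat, h⟩ with hj
    have hreg : Function.update a j (xor (a j) (zOf Q l x p.divNat j)) = register Q l x p ↔
        a = register Q l x (p + 1) := by
      constructor
      · intro e
        ext j'
        have e' := congrFun e j'
        by_cases hjj : j' = j
        · rw [hjj] at e' ⊢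
          rw [Function.update_self] at e'
          rw [register_succ_of_eq x p j rfl, ← e', Bool.xor_assoc, Bool.xor_self,
            Bool.xor_false]
        · rw [Function.update_of_ne hjj] at e'
          rw [register_succ_of_ne x p j' (fun e => hjj (Fin.ext e.symm)), e']
      · rintro rfl
        ext j'
        by_cases hjj : j' = j
        · rw [hjj]
          rw [Function.update_self, register_succ_of_eq x p j rfl, Bool.xor_assoc,
            Bool.xor_self, Bool.xor_false]
        · rw [Function.update_of_ne hjj,
            register_succ_of_ne x p j' (fun e => hjj (Fin.ext e.symm))]
    have hlt : ∀ i : Fin Q, (i : ℕ) * (l + 1) + l < p + 1 ↔ (i : ℕ) * (l + 1) + l < p := by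
      intro i
      have : (i : ℕ) * (l + 1) + l ≠ p := by
        intro e
        rw [Fin.coe_modNat, ← e, mul_comm, Nat.mul_add_mod, Nat.mod_eq_of_lt (by omega)] at h
        omega
      omega
    simp only [flipBit_apply, stateAt_apply, hreg, hlt, Complex.ofReal_one, one_mul]
  · rw [signedPerm_mulVec]
    ext ⟨k, a⟩
    have hy : x ⟨Q * l + p.divNat, yIdx p.divNat⟩ = yOf Q l x p.divNat := rfl
    have hreg : register Q l x (p + 1) = register Q l x p := by
      ext j
      exact register_succ_of_ne x p j (by omega)
    simp only [Equiv.Perm.one_apply, stateAt_apply, hreg, hy]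
    split_ifs with ha
    · have hlt := fun i : Fin Q => mul_add_lt_succ_iff p (show (p.modNat : ℕ) = l by omega) i
      have hnot : ¬ (p.divNat : ℕ) * (l + 1) + l < p := by omega
      rw [← Finset.mul_prod_erase _ _ (Finset.mem_univ p.divNat),
        ← Finset.mul_prod_erase _ _ (Finset.mem_univ p.divNat), if_neg hnot,
        if_pos ((hlt _).mpr (Or.inl rfl)), ha, register_eq_xorZ x p h]
      have : ∏ i ∈ Finset.univ.erase p.divNat, (if (i : ℕ) * (l + 1) + l < p + 1 then
            s k (xorZ Q l x i) (yOf Q l x i) else 1) =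
          ∏ i ∈ Finset.univ.erase p.divNat, (if (i : ℕ) * (l + 1) + l < p then
            s k (xorZ Q l x i) (yOf Q l x i) else 1) := by
        refine Finset.prod_congr rfl fun i hi => ?_
        simp only [hlt, Finset.ne_of_mem_erase hi, false_or]
      rw [this]
      push_cast
      ring
    · rw [mul_zero]

open scoped Kronecker in
/-- A one-sided QOBDD whose acceptance probability is the squared average over `k` of the product
of the signs collected along the interleaved order. -/
lemma exists_QOBDD_of_signs {t : ℕ} (ht : 0 < t) (Q l : ℕ)
    (s : Fin t → (Fin l → Bool) → Bool → ℝ) (hs : ∀ k a b, s k a b * s k a b = 1) :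
    ∃ M : QOBDD (Q * (l + 1)) (t * 2 ^ l), ∀ x, M.acceptProb x =
      ((∑ k, ∏ i : Fin Q, s k (xorZ Q l x i) (yOf Q l x i)) / t) ^ 2 := by
  have ht' : (0 : ℝ) < t := Nat.cast_pos.mpr ht
  let k₀ : Fin t := ⟨0, ht⟩
  let c : ℝ := (Real.sqrt t)⁻¹
  have hc : c * c = (t : ℝ)⁻¹ := by
    rw [← mul_inv, Real.mul_self_sqrt ht'.le]
  obtain ⟨U, hU, hUc⟩ := exists_unitary_column k₀ (fun _ => (c : ℂ)) (by
    simp [Complex.normSq_ofReal, hc, ht'.ne'])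
  let V : Matrix (Fin t × (Fin l → Bool)) (Fin t × (Fin l → Bool)) ℂ := U ⊗ₖ 1
  have hV : V ∈ Matrix.unitaryGroup (Fin t × (Fin l → Bool)) ℂ :=
    Matrix.kronecker_mem_unitary hU (one_mem _)
  have hcard : Fintype.card (Fin t × (Fin l → Bool)) = t * 2 ^ l := by simp
  rw [← hcard]
  obtain ⟨M, hM⟩ := exists_QOBDD_of_gates (interleave Q l) (gate Q l s)
    (gate_mem_unitaryGroup Q l s hs) V hV (k₀, fun _ => false)
    (Finset.univ.filter fun r => r.1 = k₀)
  refine ⟨M, fun x => ?_⟩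
  rw [hM x (stateAt Q l s (fun _ => (c : ℂ)) x) ?_ (gate_mulVec_stateAt Q l s _ x)]
  · have hstate : ∀ k a, stateAt Q l s (fun _ => (c : ℂ)) x (Q * (l + 1)) (k, a) =
        if a = register Q l x (Q * (l + 1)) then
          ((c * ∏ i : Fin Q, s k (xorZ Q l x i) (yOf Q l x i) : ℝ) : ℂ) else 0 := by
      intro k a
      rw [stateAt_apply]
      have : ∀ i : Fin Q, (i : ℕ) * (l + 1) + l < Q * (l + 1) := fun i => by
        have := Nat.mul_le_mul_right (l + 1) i.isLt
        rw [Nat.succ_mul] at this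
        omega
      simp [this]
    have hamp : ∀ a, (star V).mulVec (stateAt Q l s (fun _ => (c : ℂ)) x (Q * (l + 1))) (k₀, a) =
        if a = register Q l x (Q * (l + 1)) then
          (((∑ k, ∏ i : Fin Q, s k (xorZ Q l x i) (yOf Q l x i)) / t : ℝ) : ℂ) else 0 := by
      intro a
      have hentry : ∀ k a', (star V) (k₀, a) (k, a') = if a' = a then (c : ℂ) else 0 := by
        intro k a'
        simp [V, Matrix.star_apply, Matrix.kroneckerMap_apply, hUc, Matrix.one_apply]
        split_ifs <;> simp
      simp only [Matrix.mulVec, dotProduct, Fintype.sum_prod_type, hentry, hstate, ite_mul,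
        zero_mul, Finset.sum_ite_eq', Finset.mem_univ, if_true]
      split_ifs
      · rw [div_eq_inv_mul, ← hc, mul_assoc, Finset.mul_sum, Finset.mul_sum]
        push_cast
        rfl
      · simp
    rw [Finset.sum_filter, Fintype.sum_prod_type, Finset.sum_comm]
    simp only [Finset.sum_ite_eq', Finset.mem_univ, if_true, hamp]
    rw [Finset.sum_eq_single (register Q l x (Q * (l + 1)))]
    · rw [if_pos rfl, Complex.normSq_ofReal, sq]
    · intro a _ ha
      rw [if_neg ha, map_zero]
    · simp
  · ext ⟨k, a⟩
    have hreg : register Q l x 0 = fun _ => false := by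
      ext j
      simp [register]
    simp [stateAt_apply, hreg, V, Matrix.kroneckerMap_apply, hUc, Matrix.one_apply]

/-- The signs collected by the vector `h` are the character `h` of the difference of both halves. -/
lemma prod_bitSign_eq_prod_xor {q : ℕ} (hq : 0 < q) (h : Fin q → Bool) (X : Fin (2 * q) → Bool) :
    ∏ j : Fin (2 * q), bitSign (h ⟨j % q, Nat.mod_lt _ hq⟩ && X j) =
      ∏ j : Fin q, bitSign (h j && xor (X ⟨j, by omega⟩) (X ⟨q + j, by omega⟩)) := by
  rw [← Equiv.prod_comp finProdFinEquiv, Fintype.prod_prod_type, Fin.prod_univ_two,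
    ← Finset.prod_mul_distrib]
  refine Finset.prod_congr rfl fun j _ => ?_
  rw [← bitSign_and_mul_bitSign_and]
  have h0 : finProdFinEquiv ((0 : Fin 2), j) = (⟨j, by omega⟩ : Fin (2 * q)) :=
    Fin.ext (by simp [finProdFinEquiv])
  have h1 : finProdFinEquiv ((1 : Fin 2), j) = (⟨q + j, by omega⟩ : Fin (2 * q)) :=
    Fin.ext (by simp [finProdFinEquiv, add_comm])
  rw [h0, h1]
  simp [Nat.mod_eq_of_lt j.isLt]

/-- `⊕ord(EQ_q)` has a one-sided bounded-error QOBDD of width `O(q²)`. -/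
theorem stmt8 :
    ∃ c : ℕ, 0 < c ∧
      ∀ q : ℕ, 1 ≤ q →
        ∃ W : ℕ, W ≤ c * q ^ 2 ∧
          ∃ M : QOBDD (2 * q * (Nat.clog 2 (2 * q) + 1)) W,
            ∀ x, (xorOrdF (2 * q) (EQF q) x = some true → M.acceptProb x = 1) ∧
                 (xorOrdF (2 * q) (EQF q) x = some false → M.acceptProb x ≤ 1 / 3) := by
  refine ⟨48, by norm_num, fun q hq => ?_⟩
  obtain ⟨h, hbias⟩ := exists_small_bias q hq
  have hq' : (0 : ℝ) < q := Nat.cast_pos.mpr hq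
  set l := Nat.clog 2 (2 * q)
  refine ⟨12 * q * 2 ^ l, ?_, ?_⟩
  · have hlt : 2 ^ (l - 1) < 2 * q := Nat.pow_pred_clog_lt_self one_lt_two (by omega)
    have hpos : 0 < l := Nat.clog_pos one_lt_two (by omega)
    have hpow : 2 ^ l = 2 * 2 ^ (l - 1) := by rw [← pow_succ', Nat.sub_add_cancel hpos]
    calc 12 * q * 2 ^ l ≤ 12 * q * (4 * q) := Nat.mul_le_mul_left _ (by omega)
      _ = 48 * q ^ 2 := by ring
  obtain ⟨M, hM⟩ := exists_QOBDD_of_signs (t := 12 * q) (by omega) (2 * q) l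
    (fun k a b => bitSign (h k ⟨binVal l a % q, Nat.mod_lt _ hq⟩ && b))
    fun k a b => bitSign_mul_self _
  refine ⟨M, fun x => ?_⟩
  rw [hM]
  unfold xorOrdF ordPartial
  split_ifs with hσ
  swap
  · simp
  set σ := hσ.choose
  have hσs : ∀ i, addrXor (2 * q) l x i = (σ i : ℕ) := hσ.choose_spec
  set X : Fin (2 * q) → Bool := fun j => yOf (2 * q) l x (σ.symm j) with hX
  have hprod : ∀ k, ∏ i : Fin (2 * q), bitSign (h k ⟨binVal l (xorZ (2 * q) l x i) % q,
      Nat.mod_lt _ hq⟩ && yOf (2 * q) l x i) =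
      ∏ j : Fin q, bitSign (h k j && xor (X ⟨j, by omega⟩) (X ⟨q + j, by omega⟩)) := by
    intro k
    rw [← prod_bitSign_eq_prod_xor hq, eq_comm, ← Equiv.prod_comp σ]
    refine Finset.prod_congr rfl fun i _ => ?_
    have hi : binVal l (xorZ (2 * q) l x i) = (σ i : ℕ) := hσs i
    simp only [hi, hX, Equiv.symm_apply_apply]
  simp only [hprod, Option.some.injEq, EQF, decide_eq_true_eq, decide_eq_false_iff_not]
  constructor
  · intro heq
    have hone : ∀ k, ∏ j : Fin q, bitSign (h k j &&
        xor (X ⟨j, by omega⟩) (X ⟨q + j, by omega⟩)) = 1 := fun k =>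
      Finset.prod_eq_one fun j _ => by rw [show X ⟨j, _⟩ = X ⟨q + j, _⟩ from heq j]; simp [bitSign]
    simp only [hone]
    simp [hq'.ne']
  · intro hne
    obtain ⟨j, hj⟩ := not_forall.mp hne
    have hb := hbias (fun j => xor (X ⟨j, by omega⟩) (X ⟨q + j, by omega⟩))
      ⟨j, by simpa [bne_iff_ne] using hj⟩
    rw [div_pow, div_le_iff₀ (by positivity)]
    refine hb.trans_eq ?_
    push_cast
    ring
end

section
/- For every integer q ≥ 1, every deterministic OBDD (with an arbitrary variable order) representing the total Boolean function REQ_q has width at least 2^q; in terms of the input length n = 2q(⌈log₂ 2q⌉+1) this width is 2^{Ω(n/log n)}. -/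
set_option maxHeartbeats 1000000
set_option linter.unusedVariables false
/-- A deterministic OBDD of width `w` over `n` Boolean variables. -/
structure OBDD (n w : ℕ) where
  ord : Equiv.Perm (Fin n)
  tr : Fin n → Fin w → Bool → Fin w
  start : Fin w
  acc : Finset (Fin w)

namespace OBDD

def final {n w : ℕ} (M : OBDD n w) (x : Fin n → Bool) : Fin w :=
  (List.finRange n).foldl (fun s i => M.tr i s (x (M.ord i))) M.start

def Accepts {n w : ℕ} (M : OBDD n w) (x : Fin n → Bool) : Prop :=
  M.final x ∈ M.acc

def Represents {n w : ℕ} (M : OBDD n w) (f : (Fin n → Bool) → Bool) : Prop :=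
  ∀ x, M.Accepts x ↔ f x = true

def RepresentsPartial {n w : ℕ} (M : OBDD n w) (F : (Fin n → Bool) → Option Bool) : Prop :=
  ∀ x b, F x = some b → (M.Accepts x ↔ b = true)

/-- The OBDD obtained by reordering: order `π`, transitions `tr' i = tr (ord⁻¹ (π i))`. -/
def reorder {n w : ℕ} (M : OBDD n w) (π : Equiv.Perm (Fin n)) : OBDD n w :=
  ⟨π, fun i => M.tr (M.ord.symm (π i)), M.start, M.acc⟩

/-- Every reordering represents the same function as `M`. -/
def Commutative {n w : ℕ} (M : OBDD n w) : Prop :=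
  ∀ (π : Equiv.Perm (Fin n)) (x : Fin n → Bool),
    (M.reorder π).Accepts x ↔ M.Accepts x

end OBDD
/-- `Adr(i)` for an input of `REQ_q`. -/
def reqAdr (q : ℕ) (x : Fin (2 * q * (Nat.clog 2 (2 * q) + 1)) → Bool) (i : Fin (2 * q)) : ℕ :=
  addrXor (2 * q) (Nat.clog 2 (2 * q)) x i

def reqU (q : ℕ) (x : Fin (2 * q * (Nat.clog 2 (2 * q) + 1)) → Bool) : ℕ :=
  (∑ i : Fin (2 * q),
      if reqAdr q x i < q then
        2 ^ reqAdr q x i * (if yOf (2 * q) (Nat.clog 2 (2 * q)) x i then 1 else 0)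
      else 0) % 2 ^ q

def reqV (q : ℕ) (x : Fin (2 * q * (Nat.clog 2 (2 * q) + 1)) → Bool) : ℕ :=
  (∑ i : Fin (2 * q),
      if q ≤ reqAdr q x i then
        2 ^ (reqAdr q x i - q) * (if yOf (2 * q) (Nat.clog 2 (2 * q)) x i then 1 else 0)
      else 0) % 2 ^ q

/-- The (total) xor-reordered equality function `REQ_q`. -/
def REQ (q : ℕ) (x : Fin (2 * q * (Nat.clog 2 (2 * q) + 1)) → Bool) : Bool :=
  decide (reqU q x = reqV q x)

/-- Fooling-set bound: if the first `k` variables read depend only on `a`, the remaining ones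
only on `b`, and `f (X a b)` decides `a = b`, then an OBDD for `f` has at least `|α|` states. -/
theorem OBDD.card_le_width_of_fooling {n w : ℕ} {α : Type*} [Fintype α] (M : OBDD n w)
    {f : (Fin n → Bool) → Bool} (h : M.Represents f) (k : ℕ) (X : α → α → Fin n → Bool)
    (hpre : ∀ a b b' (i : Fin n), (i : ℕ) < k → X a b (M.ord i) = X a b' (M.ord i))
    (hsuf : ∀ a a' b (i : Fin n), k ≤ (i : ℕ) → X a b (M.ord i) = X a' b (M.ord i))
    (hf : ∀ a b, f (X a b) = true ↔ a = b) : Fintype.card α ≤ w := by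
  let run (x : Fin n → Bool) (L : List (Fin n)) (s : Fin w) : Fin w :=
    L.foldl (fun s i => M.tr i s (x (M.ord i))) s
  have run_congr : ∀ (x y : Fin n → Bool) (L : List (Fin n)) (s : Fin w),
      (∀ i ∈ L, x (M.ord i) = y (M.ord i)) → run x L s = run y L s := by
    intro x y L s hL
    refine List.foldl_ext _ _ _ fun s i hi => ?_
    rw [hL i hi]
  have hfinal : ∀ x, M.final x =
      run x ((List.finRange n).drop k) (run x ((List.finRange n).take k) M.start) := by
    intro x
    simp only [run, OBDD.final]
    rw [← List.foldl_append, List.take_append_drop]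
  have htake : ∀ i ∈ (List.finRange n).take k, (i : ℕ) < k := by
    intro i hi
    obtain ⟨j, hj, rfl⟩ := List.mem_take_iff_getElem.1 hi
    simp at hj ⊢
    omega
  have hdrop : ∀ i ∈ (List.finRange n).drop k, k ≤ (i : ℕ) := by
    intro i hi
    obtain ⟨j, hj, rfl⟩ := List.mem_drop_iff_getElem.1 hi
    simp
  have hinj : Function.Injective
      fun a => run (X a a) ((List.finRange n).take k) M.start := by
    intro a b hab
    have heq : M.final (X a b) = M.final (X b b) := by
      rw [hfinal, hfinal, run_congr (X a b) (X a a) _ _ fun i hi => hpre _ _ _ _ (htake i hi),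
        run_congr (X a b) (X b b) _ _ fun i hi => hsuf _ _ _ _ (hdrop i hi)]
      exact congrArg _ hab
    rw [← hf, ← h, OBDD.Accepts, heq]
    exact (h _).2 ((hf b b).2 rfl)
  simpa using Fintype.card_le_of_injective _ hinj

/-- The low `l` bits of `a` sum up to `a % 2 ^ l`. -/
theorem sum_range_testBit (a l : ℕ) :
    ∑ j ∈ Finset.range l, (if a.testBit j then 2 ^ j else 0) = a % 2 ^ l := by
  induction l with
  | zero => simp [Nat.mod_one]
  | succ l ih =>
    rw [Finset.sum_range_succ, ih, Nat.mod_pow_succ, Nat.testBit_eq_decide_div_mod_eq]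
    rcases Nat.mod_two_eq_zero_or_one (a / 2 ^ l) with h | h <;> simp [h]

theorem binVal_testBit {l a : ℕ} (ha : a < 2 ^ l) :
    binVal l (fun j => a.testBit (l - 1 - (j : ℕ))) = a := by
  rw [binVal, Fin.sum_univ_eq_sum_range
    (fun j => if a.testBit (l - 1 - j) then 2 ^ (l - 1 - j) else 0),
    Finset.sum_range_reflect (fun j => if a.testBit j then 2 ^ j else 0),
    sum_range_testBit, Nat.mod_eq_of_lt ha]

/-- The input with address bits `Z` and value bits `Y`. -/
def mkInput {m l : ℕ} (Z : ℕ → ℕ → Bool) (Y : Fin m → Bool) (v : Fin (m * (l + 1))) : Bool :=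
  if h : (v : ℕ) < m * l then Z (v / l) (v % l)
  else Y ⟨v - m * l, by have := v.2; have := Nat.mul_add_one m l; omega⟩

theorem zOf_mkInput {m l : ℕ} (Z : ℕ → ℕ → Bool) (Y : Fin m → Bool) (i : Fin m) (j : Fin l) :
    zOf m l (mkInput Z Y) i j = Z i j := by
  have hlt : (i : ℕ) * l + j < m * l := by
    have := Nat.mul_le_mul_right l i.2
    rw [Nat.succ_mul] at this
    omega
  have hl : 0 < l := j.pos
  have hdiv : ((i : ℕ) * l + j) / l = i := by
    rw [mul_comm, Nat.mul_add_div hl, Nat.div_eq_of_lt j.2, add_zero]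
  have hmod : ((i : ℕ) * l + j) % l = j := by
    rw [mul_comm, Nat.mul_add_mod, Nat.mod_eq_of_lt j.2]
  simp [zOf, mkInput, hlt, hdiv, hmod]

theorem yOf_mkInput {m l : ℕ} (Z : ℕ → ℕ → Bool) (Y : Fin m → Bool) (i : Fin m) :
    yOf m l (mkInput Z Y) i = Y i := by
  simp [yOf, mkInput]

theorem mkInput_eq_of_yOf {m l : ℕ} (Z : ℕ → ℕ → Bool) (Y Y' : Fin m → Bool)
    (v : Fin (m * (l + 1))) (h : ∀ i : Fin m, v = ⟨m * l + i, yIdx i⟩ → Y i = Y' i) :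
    mkInput Z Y v = mkInput Z Y' v := by
  unfold mkInput
  split_ifs with hv
  · rfl
  · exact h _ (Fin.ext (by simp; omega))

/-- Consecutive differences of the bits `B` make the prefix xors equal to `B`. -/
theorem xorZ_mkInput {m l : ℕ} (B : ℕ → ℕ → Bool) (hB : ∀ j, B 0 j = false) (Y : Fin m → Bool)
    (i : Fin m) (j : Fin l) :
    xorZ m l (mkInput (fun i j => xor (B (i + 1) j) (B i j)) Y) i j = B (i + 1) j := by
  have key : ∀ k ≤ m, (Finset.univ.filter (fun i' : Fin m => (i' : ℕ) < k ∧
      xor (B (i' + 1) j) (B i' j) = true)).card % 2 = (B k j).toNat := by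
    intro k
    induction k with
    | zero => simp [hB]
    | succ k ih =>
      intro hk
      have ih := ih (by omega)
      by_cases hx : xor (B (k + 1) j) (B k j) = true
      · have : (Finset.univ.filter (fun i' : Fin m => (i' : ℕ) < k + 1 ∧
            xor (B (i' + 1) j) (B i' j) = true)) = insert ⟨k, hk⟩
            (Finset.univ.filter (fun i' : Fin m => (i' : ℕ) < k ∧
            xor (B (i' + 1) j) (B i' j) = true)) := by
          ext i'
          simp only [Finset.mem_filter, Finset.mem_univ, true_and, Finset.mem_insert, Fin.ext_iff]
          constructor
          · rintro ⟨h1, h2⟩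
            by_cases h : (i' : ℕ) = k
            · exact .inl h
            · exact .inr ⟨by omega, h2⟩
          · rintro (h | ⟨h1, h2⟩)
            · exact ⟨by omega, by rw [h]; exact hx⟩
            · exact ⟨by omega, h2⟩
        rw [this, Finset.card_insert_of_notMem (by simp), Nat.add_mod, ih]
        revert hx
        cases B (k + 1) j <;> cases B k j <;> simp
      · have : (Finset.univ.filter (fun i' : Fin m => (i' : ℕ) < k + 1 ∧
            xor (B (i' + 1) j) (B i' j) = true)) =
            (Finset.univ.filter (fun i' : Fin m => (i' : ℕ) < k ∧
            xor (B (i' + 1) j) (B i' j) = true)) := by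
          refine Finset.filter_congr fun i' _ => ⟨?_, fun h => ⟨by omega, h.2⟩⟩
          rintro ⟨h1, h2⟩
          refine ⟨lt_of_le_of_ne (by omega) ?_, h2⟩
          rintro rfl
          exact hx h2
        rw [this, ih]
        revert hx
        cases B (k + 1) j <;> cases B k j <;> simp
  have := key (i + 1) i.2
  simp only [xorZ, zOf_mkInput, Fin.le_def, ← Nat.lt_succ_iff, Nat.succ_eq_add_one, this]
  cases B (i + 1) j <;> simp

/-- Every list of addresses below `2 ^ l` is realised, independently of the value bits. -/
theorem exists_addrXor_eq {m l : ℕ} (A : Fin m → ℕ) (hA : ∀ i, A i < 2 ^ l) :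
    ∃ Z : ℕ → ℕ → Bool, ∀ (Y : Fin m → Bool) (i : Fin m), addrXor m l (mkInput Z Y) i = A i := by
  let B : ℕ → ℕ → Bool := fun k j =>
    if h : 0 < k ∧ k ≤ m then (A ⟨k - 1, by omega⟩).testBit (l - 1 - j) else false
  refine ⟨fun i j => xor (B (i + 1) j) (B i j), fun Y i => ?_⟩
  have hx : xorZ m l (mkInput (fun i j => xor (B (i + 1) j) (B i j)) Y) i =
      fun j : Fin l => (A i).testBit (l - 1 - (j : ℕ)) := by
    funext j
    rw [xorZ_mkInput B (fun j => by simp [B])]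
    have : (i : ℕ) + 1 ≤ m := i.2
    simp [B, this]
  rw [addrXor, hx, binVal_testBit (hA i)]

/-- Inputs whose addresses form the permutation `σ` and whose value bits spell out `a` at the
addresses below `q` and `b` at the others are accepted exactly when `a = b`. -/
theorem REQ_eq_true_iff {q : ℕ} (σ : Equiv.Perm (Fin (2 * q)))
    (x : Fin (2 * q * (Nat.clog 2 (2 * q) + 1)) → Bool) (hx : ∀ i, reqAdr q x i = σ i)
    {a b : ℕ} (ha : a < 2 ^ q) (hb : b < 2 ^ q)
    (hy : ∀ i, yOf (2 * q) (Nat.clog 2 (2 * q)) x i =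
      if (σ i : ℕ) < q then a.testBit (σ i) else b.testBit (σ i - q)) :
    REQ q x = true ↔ a = b := by
  have hu : reqU q x = a := by
    simp only [reqU, hx, hy]
    rw [Equiv.sum_comp σ (fun i : Fin (2 * q) => if (i : ℕ) < q then 2 ^ (i : ℕ) *
      (if (if (i : ℕ) < q then a.testBit i else b.testBit (i - q)) = true then 1 else 0) else 0),
      Fin.sum_univ_eq_sum_range (fun i => if i < q then 2 ^ i *
      (if (if i < q then a.testBit i else b.testBit (i - q)) = true then 1 else 0) else 0),
      two_mul, Finset.sum_range_add, Finset.sum_eq_zero (s := Finset.range q)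
        (f := fun k => if q + k < q then _ else 0) (by simp), add_zero]
    rw [Finset.sum_congr rfl (g := fun j => if a.testBit j then 2 ^ j else 0),
      sum_range_testBit, Nat.mod_mod, Nat.mod_eq_of_lt ha]
    intro j hj
    simp [Finset.mem_range.1 hj]
  have hv : reqV q x = b := by
    simp only [reqV, hx, hy]
    rw [Equiv.sum_comp σ (fun i : Fin (2 * q) => if q ≤ (i : ℕ) then 2 ^ ((i : ℕ) - q) *
      (if (if (i : ℕ) < q then a.testBit i else b.testBit (i - q)) = true then 1 else 0) else 0),
      Fin.sum_univ_eq_sum_range (fun i => if q ≤ i then 2 ^ (i - q) *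
      (if (if i < q then a.testBit i else b.testBit (i - q)) = true then 1 else 0) else 0),
      two_mul, Finset.sum_range_add, Finset.sum_eq_zero (s := Finset.range q)
        (f := fun k => if q ≤ k then _ else 0), zero_add]
    · simp [sum_range_testBit, Nat.mod_eq_of_lt hb]
    · intro j hj
      simp [Finset.mem_range.1 hj]
  simp [REQ, hu, hv]

/-- every deterministic OBDD representing `REQ_q` has width `≥ 2^q`. -/
theorem stmt9 (q : ℕ) (hq : 1 ≤ q) (w : ℕ)
    (M : OBDD (2 * q * (Nat.clog 2 (2 * q) + 1)) w)
    (h : M.Represents (REQ q)) : 2 ^ q ≤ w := by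
  -- `pos i` is the time at which `y_i` is read; `σ` ranks the `y_i` by that time.
  let pos : Fin (2 * q) → Fin (2 * q * (Nat.clog 2 (2 * q) + 1)) :=
    fun i => M.ord.symm ⟨2 * q * Nat.clog 2 (2 * q) + i, yIdx i⟩
  have hpos : Function.Injective pos := by
    intro i j hij
    simpa [pos, Fin.ext_iff] using hij
  let σ : Equiv.Perm (Fin (2 * q)) := (Tuple.sort pos).symm
  have hmono : StrictMono (pos ∘ Tuple.sort pos) :=
    (Tuple.monotone_sort pos).strictMono_of_injective
      (hpos.comp (Tuple.sort pos).injective)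
  let mid : Fin (2 * q) := ⟨q, by omega⟩
  have hcut : ∀ i, pos i < pos (Tuple.sort pos mid) ↔ (σ i : ℕ) < q := by
    intro i
    have := hmono.lt_iff_lt (a := σ i) (b := mid)
    rw [Function.comp_apply, Function.comp_apply, Equiv.apply_symm_apply] at this
    exact this
  obtain ⟨Z, hZ⟩ := exists_addrXor_eq (l := Nat.clog 2 (2 * q)) (fun i => (σ i : ℕ))
    (fun i => (σ i).2.trans_le (Nat.le_pow_clog one_lt_two _))
  let Y : Fin (2 ^ q) → Fin (2 ^ q) → Fin (2 * q) → Bool := fun a b i =>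
    if (σ i : ℕ) < q then (a : ℕ).testBit (σ i) else (b : ℕ).testBit (σ i - q)
  have hread : ∀ t (i : Fin (2 * q)),
      M.ord t = ⟨2 * q * Nat.clog 2 (2 * q) + i, yIdx i⟩ → pos i = t := by
    intro t i ht
    simp [pos, ← ht]
  have := M.card_le_width_of_fooling h (pos (Tuple.sort pos mid)) (fun a b => mkInput Z (Y a b))
    (fun a b b' t ht => mkInput_eq_of_yOf _ _ _ _ fun i hi => by
      have hlt : (σ i : ℕ) < q := (hcut i).1 (by rw [hread t i hi]; exact ht)
      simp [Y, hlt])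
    (fun a a' b t ht => mkInput_eq_of_yOf _ _ _ _ fun i hi => by
      have hge : ¬ (σ i : ℕ) < q := fun hlt => by
        have := (hcut i).2 hlt
        rw [hread t i hi] at this
        exact absurd (Fin.lt_def.1 this) (not_lt.2 ht)
      simp [Y, hge])
    (fun a b => by
      rw [REQ_eq_true_iff σ _ (hZ _) a.2 b.2 (fun i => yOf_mkInput _ _ i), Fin.ext_iff])
  simpa using this
end
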